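/- Let k be an algebraically closed field of characteristic 0 or p > 2, m an odd positive integer not divisible by the characteristic of k, ζ ∈ k a primitive m-th root of unity, and n ≥ 2. Let u ∈ SO(2n,k) satisfy u^m = I, with m the least positive integer j such that u^j ∈ {I, −I} (so Int u has order m as an automorphism of SO(2n,k)). Set 𝔤(1) = {x ∈ so(2n,k) : u·x·u⁻¹ = ζ·x} and H = {h ∈ SO(2n,k) : h·u = u·h}. Let c be a Cartan subspace of 𝔤(1) and r = dim c. Then, with respect to a suitable basis of c, the little Weyl group of c with respect to H equals G(2m,1,r) if n > mr and there exists x ∈ O(2n,k) with det x = −1 such that x·u = u·x and x commutes with every element of c; otherwise it equals G(2m,2,r). -/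

import Mathlib

open Matrix

/-- The group `G(m,q,r)` of `r×r` monomial matrices whose nonzero entries are
`m`-th roots of unity and the product of whose nonzero entries is an
`(m/q)`-th root of unity, as a set of matrices. -/
def GmqrSet (k : Type*) [Field k] (m q r : ℕ) : Set (Matrix (Fin r) (Fin r) k) :=
  {w | ∃ σ : Equiv.Perm (Fin r),
    (∀ i j, i ≠ σ j → w i j = 0) ∧
    (∀ j, w (σ j) j ^ m = 1) ∧
    (∏ j, w (σ j) j) ^ (m / q) = 1}

/-- A matrix is semisimple if it is diagonalizable. -/
def IsSemisimpleMat {k : Type*} [Field k] {N : Type*} [Fintype N] [DecidableEq N]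
    (x : Matrix N N k) : Prop :=
  ∃ P : Matrix N N k, IsUnit P.det ∧ (P * x * P⁻¹).IsDiag

/-- `c` is a Cartan subspace of `g1`: a subspace of `g1`, consisting of
pairwise commuting diagonalizable matrices, and maximal among such. -/
def IsCartanSubspace {k : Type*} [Field k] {N : Type*} [Fintype N] [DecidableEq N]
    (g1 : Set (Matrix N N k)) (c : Submodule k (Matrix N N k)) : Prop :=
  (c : Set (Matrix N N k)) ⊆ g1 ∧
  (∀ x ∈ c, ∀ y ∈ c, x * y = y * x) ∧
  (∀ x ∈ c, IsSemisimpleMat x) ∧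
  ∀ c' : Submodule k (Matrix N N k),
    ((c' : Set (Matrix N N k)) ⊆ g1 ∧ (∀ x ∈ c', ∀ y ∈ c', x * y = y * x) ∧
      (∀ x ∈ c', IsSemisimpleMat x)) → c ≤ c' → c' = c

/-- The little Weyl group of `c` with respect to `H`, written with respect to
the family `b` (a basis of `c`): the set of matrices of the transformations
`x ↦ h·x·h⁻¹` of `c`, for `h ∈ H` normalizing `c`. -/
def littleWeylSet {k : Type*} [Field k] {N : Type*} [Fintype N] [DecidableEq N] {r : ℕ}
    (H : Set (Matrix N N k)) (c : Submodule k (Matrix N N k))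
    (b : Fin r → Matrix N N k) : Set (Matrix (Fin r) (Fin r) k) :=
  {w | ∃ h ∈ H, (∀ x ∈ c, h * x * h⁻¹ ∈ c) ∧ (∀ x ∈ c, h⁻¹ * x * h ∈ c) ∧
    ∀ j, h * b j * h⁻¹ = ∑ i, w i j • b i}

/-- The `N×N` matrix with `1` on the antidiagonal and `0` elsewhere. -/
def antidiagJ (k : Type*) [Field k] (N : ℕ) : Matrix (Fin N) (Fin N) k :=
  Matrix.of fun i j => if (i : ℕ) + (j : ℕ) = N - 1 then 1 else 0

/-!
Since `m` is odd, the `2m`-th roots of unity form a cyclic group generated by `-ζ⁻¹`. If `e` is a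
joint eigenvector of `c` of weight `χ`, then `u *ᵥ e` has weight `ζ⁻¹ χ`, while the form `J` pairs
the weight space of `χ` with that of `-χ`. Hence for `χ ≠ 0` the weights `t χ`, with `t` a `2m`-th
root of unity, carry a chain of joint eigenvectors which `u` shifts cyclically and in which `J`
pairs the vector at `t` with the one at `-t`. Splitting off such chains until `c` vanishes on
their orthogonal complement gives a frame, and by maximality `c` consists of all matrices with
eigenvalue `a i * t` at the vector `t` of the `i`-th chain and `0` on the complement, so `c ≃ kʳ`.

An element of the centralizer of `u` normalizing `c` acts on `kʳ` by a matrix compatible with the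
relations `a b = 0` and with `a ↦ a ^ (2 m + 1)`, so the matrix is monomial with entries `2m`-th
roots of unity. Conversely, such a monomial matrix `w` is realized by a permutation of the frame
vectors. Its sign is `(∏ w) ^ m` up to inversion, because multiplication by `t` has sign `t ^ m` on
the `2m`-th roots of unity. A determinant `-1` can be corrected precisely by an orthogonal `x` of
determinant `-1` centralizing `u` and `c`. If the frame is a basis, such an `x` is diagonal with
entries `d t * d (-t) = 1`, which forces determinant `1`, so no `x` exists.
-/

/-! ### Joint eigenvectors of commuting diagonalizable matrices -/

section Diagonalizable

variable {k N : Type*} [Field k] [Fintype N] [DecidableEq N]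

theorem IsSemisimpleMat.exists_eigenbasis {x : Matrix N N k} (hx : IsSemisimpleMat x) :
    ∃ (b : Module.Basis N k (N → k)) (d : N → k), toLin' x = toLin b b (diagonal d) := by
  obtain ⟨P, hP, hD⟩ := hx
  have hPP : P * P⁻¹ = 1 := mul_nonsing_inv P hP
  have hP'P : P⁻¹ * P = 1 := nonsing_inv_mul P hP
  have hxP : x * P⁻¹ = P⁻¹ * diagonal (P * x * P⁻¹).diag := by
    rw [hD.diagonal_diag, ← Matrix.mul_assoc, ← Matrix.mul_assoc, hP'P, Matrix.one_mul]
  let b : Module.Basis N k (N → k) := (Pi.basisFun k N).map (.ofLinearMap (toLin' P⁻¹) (toLin' P)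
    (by rw [← toLin'_mul, hP'P, toLin'_one]) (by rw [← toLin'_mul, hPP, toLin'_one]))
  have hb (i : N) : b i = P⁻¹ *ᵥ Pi.single i 1 := by
    rw [Module.Basis.map_apply, Pi.basisFun_apply, LinearEquiv.coe_ofLinearMap, toLin'_apply]
  refine ⟨b, (P * x * P⁻¹).diag, b.ext fun i => ?_⟩
  rw [(hasEigenvector_toLin_diagonal _ i b).apply_eq_smul, hb, toLin'_apply, mulVec_mulVec, hxP,
    ← mulVec_mulVec, diagonal_mulVec_single, ← smul_eq_mul, Pi.single_smul, mulVec_smul]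

theorem IsSemisimpleMat.of_span_eigenvectors {x : Matrix N N k}
    (hx : ⊤ ≤ Submodule.span k {v | ∃ a : k, x *ᵥ v = a • v}) : IsSemisimpleMat x := by
  let b₀ := Module.Basis.ofSpan hx
  have := FiniteDimensional.fintypeBasisIndex b₀
  let b := b₀.reindex (Fintype.equivOfCardEq (β := N) (by
    rw [← Module.finrank_eq_card_basis b₀, Module.finrank_fintype_fun_eq_card]))
  have hb (i : N) : ∃ a : k, x *ᵥ b i = a • b i :=
    Module.Basis.ofSpan_subset hx ⟨_, (b₀.reindex_apply _ i).symm⟩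
  choose d hd using hb
  let Q : Matrix N N k := (Pi.basisFun k N).toMatrix b
  have hQ : IsUnit Q.det :=
    isUnit_det_of_right_inverse (Module.Basis.toMatrix_mul_toMatrix_flip _ b)
  have hxQ : x * Q = Q * diagonal d := by
    ext i j
    rw [mul_diagonal, mul_comm]
    exact congrFun (hd j) i
  refine ⟨Q⁻¹, isUnit_nonsing_inv_det Q hQ, ?_⟩
  rw [nonsing_inv_nonsing_inv Q hQ, Matrix.mul_assoc, hxQ, ← Matrix.mul_assoc,
    nonsing_inv_mul Q hQ, Matrix.one_mul]
  exact isDiag_diagonal d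

/-- `v` is a joint eigenvector (possibly zero) of all elements of `c`, with eigenvalues given by
the weight `χ`. -/
def IsWeightVector (c : Submodule k (Matrix N N k)) (χ : c → k) (v : N → k) : Prop :=
  ∀ x : c, x.1 *ᵥ v = χ x • v

variable {c : Submodule k (Matrix N N k)}

theorem iSup_iInf_eigenspace_eq_top (hcomm : ∀ x ∈ c, ∀ y ∈ c, x * y = y * x)
    (hss : ∀ x ∈ c, IsSemisimpleMat x) :
    ⨆ χ : c → k, ⨅ x : c, Module.End.eigenspace (toLin' x.1) (χ x) = ⊤ := by
  have hmax (x : c) (a : k) :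
      Module.End.maxGenEigenspace (toLin' x.1) a = Module.End.eigenspace (toLin' x.1) a := by
    obtain ⟨b, d, hbd⟩ := (hss x.1 x.2).exists_eigenbasis
    rw [hbd, maxGenEigenspace_toLin_diagonal_eq_eigenspace]
  have htop (x : c) : ⨆ a, Module.End.maxGenEigenspace (toLin' x.1) a = ⊤ := by
    obtain ⟨b, d, hbd⟩ := (hss x.1 x.2).exists_eigenbasis
    simp only [hmax]
    rw [hbd, iSup_eigenspace_toLin_diagonal_eq_top]
  have hcommute : Pairwise (Function.onFun Commute fun x : c => toLin' x.1) := fun x y _ => by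
    change toLin' x.1 ∘ₗ toLin' y.1 = toLin' y.1 ∘ₗ toLin' x.1
    rw [← toLin'_mul, ← toLin'_mul, hcomm x.1 x.2 y.1 y.2]
  simpa only [hmax] using
    Module.End.iSup_iInf_maxGenEigenspace_eq_top_of_iSup_maxGenEigenspace_eq_top_of_commute
      (fun x : c => toLin' x.1) hcommute htop

theorem exists_isWeightVector_apply_ne_zero (hcomm : ∀ x ∈ c, ∀ y ∈ c, x * y = y * x)
    (hss : ∀ x ∈ c, IsSemisimpleMat x) {V : Type*} [AddCommGroup V] [Module k V]
    {f : (N → k) →ₗ[k] V} (hf : f ≠ 0) : ∃ χ v, IsWeightVector c χ v ∧ f v ≠ 0 := by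
  contrapose! hf
  rw [← LinearMap.ker_eq_top, eq_top_iff, ← iSup_iInf_eigenspace_eq_top hcomm hss]
  refine iSup_le fun χ v hv => hf χ v fun x => ?_
  rw [← toLin'_apply]
  exact Module.End.mem_eigenspace_iff.1 ((Submodule.mem_iInf _).1 hv x)

end Diagonalizable

section Corner

variable {R I N : Type*} [CommRing R] [Fintype I] [DecidableEq I] [Fintype N]
  {E : Matrix N I R} {F : Matrix I N R}

theorem corner_mul_corner (hFE : F * E = 1) (A B : Matrix I I R) :
    E * A * F * (E * B * F) = E * (A * B) * F :=
  calc E * A * F * (E * B * F) = E * A * (F * E) * B * F := by simp only [Matrix.mul_assoc]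
    _ = E * (A * B) * F := by rw [hFE, Matrix.mul_one, Matrix.mul_assoc E]

theorem corner_injective (hFE : F * E = 1) :
    Function.Injective fun A : Matrix I I R => E * A * F := by
  refine Function.LeftInverse.injective (g := fun X => F * X * E) fun A => ?_
  calc F * (E * A * F) * E = F * E * A * (F * E) := by simp only [Matrix.mul_assoc]
    _ = A := by rw [hFE, Matrix.one_mul, Matrix.mul_one]

variable [DecidableEq N]

theorem corner_pow_succ (hFE : F * E = 1) (A : Matrix I I R) (n : ℕ) :
    (E * A * F) ^ (n + 1) = E * A ^ (n + 1) * F := by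
  induction n with
  | zero => simp only [zero_add, pow_one]
  | succ n ih => rw [pow_succ, ih, corner_mul_corner hFE, ← pow_succ]

/-- When `F * E = 1`, the space splits as the range of `E` plus the kernel of `F`; this sends `A` to
the matrix acting as `A` on the former and as the identity on the latter. -/
def extendByOne (hFE : F * E = 1) : Matrix I I R →* Matrix N N R where
  toFun A := 1 + E * (A - 1) * F
  map_one' := by rw [sub_self, Matrix.mul_zero, Matrix.zero_mul, add_zero]
  map_mul' A B := by
    rw [add_mul, mul_add, mul_add, corner_mul_corner hFE, mul_one, mul_one, one_mul, add_assoc,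
      ← Matrix.add_mul, ← Matrix.mul_add, ← Matrix.add_mul, ← Matrix.mul_add]
    congr 3
    noncomm_ring

theorem extendByOne_apply (hFE : F * E = 1) (A : Matrix I I R) :
    extendByOne hFE A = 1 + E * (A - 1) * F := rfl

theorem det_extendByOne (hFE : F * E = 1) (A : Matrix I I R) :
    (extendByOne hFE A).det = A.det := by
  rw [extendByOne_apply, Matrix.mul_assoc, det_one_add_mul_comm, Matrix.mul_assoc, hFE,
    Matrix.mul_one, add_sub_cancel]

theorem extendByOne_mul_left (hFE : F * E = 1) (A : Matrix I I R) :
    extendByOne hFE A * E = E * A := by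
  rw [extendByOne_apply, Matrix.add_mul, Matrix.mul_assoc _ F, hFE, Matrix.mul_one, Matrix.mul_sub,
    Matrix.one_mul, Matrix.mul_one, add_sub_cancel]

theorem mul_extendByOne_right (hFE : F * E = 1) (A : Matrix I I R) :
    F * extendByOne hFE A = A * F := by
  rw [extendByOne_apply, Matrix.mul_add, ← Matrix.mul_assoc, ← Matrix.mul_assoc, hFE,
    Matrix.one_mul, Matrix.sub_mul, Matrix.mul_one, Matrix.one_mul, add_sub_cancel]

theorem extendByOne_commute (hFE : F * E = 1) {A U : Matrix I I R} {u : Matrix N N R}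
    (huE : u * E = E * U) (hFu : F * u = U * F) (hAU : A * U = U * A) :
    extendByOne hFE A * u = u * extendByOne hFE A := by
  have hcomm : E * (A - 1) * F * u = u * (E * (A - 1) * F) :=
    calc E * (A - 1) * F * u = E * ((A - 1) * U) * F := by
          rw [Matrix.mul_assoc, hFu]
          simp only [Matrix.mul_assoc]
      _ = E * (U * (A - 1)) * F := by
          rw [sub_mul A 1 U, mul_sub U A 1, hAU, one_mul, mul_one]
      _ = u * (E * (A - 1) * F) := by
          rw [← Matrix.mul_assoc E, ← huE]
          simp only [Matrix.mul_assoc]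
  rw [extendByOne_apply, Matrix.add_mul, Matrix.mul_add, hcomm, Matrix.one_mul, Matrix.mul_one]

theorem transpose_extendByOne_mul_mul (hFE : F * E = 1) {J : Matrix N N R} {A S : Matrix I I R}
    (hJE : J * E = Fᵀ * S) (hEJ : Eᵀ * J = S * F) (hA : Aᵀ * S * A = S) :
    (extendByOne hFE A)ᵀ * J * extendByOne hFE A = J := by
  obtain ⟨B, rfl⟩ : ∃ B, A = 1 + B := ⟨A - 1, (add_sub_cancel _ _).symm⟩
  have hB : S * B + Bᵀ * S + Bᵀ * S * B = 0 := by
    rw [transpose_add, transpose_one] at hA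
    rw [← sub_eq_zero.2 hA]
    noncomm_ring
  have hcross : Fᵀ * Bᵀ * Eᵀ * J * (E * B * F) = Fᵀ * (Bᵀ * S * B) * F :=
    calc Fᵀ * Bᵀ * Eᵀ * J * (E * B * F) = Fᵀ * Bᵀ * (Eᵀ * J) * E * B * F := by
          simp only [Matrix.mul_assoc]
      _ = Fᵀ * Bᵀ * S * (F * E) * B * F := by rw [hEJ]; simp only [Matrix.mul_assoc]
      _ = Fᵀ * (Bᵀ * S * B) * F := by rw [hFE, Matrix.mul_one]; simp only [Matrix.mul_assoc]
  calc (extendByOne hFE (1 + B))ᵀ * J * extendByOne hFE (1 + B)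
      = J + Fᵀ * Bᵀ * (Eᵀ * J) + (J * E * B * F + Fᵀ * Bᵀ * Eᵀ * J * (E * B * F)) := by
        rw [extendByOne_apply, add_sub_cancel_left]
        simp only [transpose_add, transpose_one, transpose_mul, Matrix.add_mul, Matrix.mul_add,
          Matrix.one_mul, Matrix.mul_one, Matrix.mul_assoc, add_assoc]
    _ = J + Fᵀ * (S * B + Bᵀ * S + Bᵀ * S * B) * F := by
        rw [hJE, hEJ, hcross, add_comm (S * B)]
        simp only [Matrix.add_mul, Matrix.mul_add, Matrix.mul_assoc, add_assoc]
    _ = J := by rw [hB, Matrix.mul_zero, Matrix.zero_mul, add_zero]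

theorem isSemisimpleMat_mul_diagonal_mul {k : Type*} [Field k] {E : Matrix N I k}
    {F : Matrix I N k} (hFE : F * E = 1) (d : I → k) :
    IsSemisimpleMat (E * diagonal d * F) := by
  refine IsSemisimpleMat.of_span_eigenvectors fun v _ => ?_
  have hcol (i : I) : (E * diagonal d * F) *ᵥ (E *ᵥ Pi.single i 1) =
      d i • (E *ᵥ Pi.single i 1) := by
    rw [mulVec_mulVec, Matrix.mul_assoc, hFE, Matrix.mul_one, ← mulVec_mulVec,
      diagonal_mulVec_single, ← smul_eq_mul, Pi.single_smul, mulVec_smul]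
  have hker : (E * diagonal d * F) *ᵥ (v - E *ᵥ (F *ᵥ v)) = (0 : k) • (v - E *ᵥ (F *ᵥ v)) := by
    rw [mulVec_sub, mulVec_mulVec, mulVec_mulVec, Matrix.mul_assoc _ F E, hFE, Matrix.mul_one,
      sub_self, zero_smul]
  have hsum : E *ᵥ (F *ᵥ v) = ∑ i, (F *ᵥ v) i • (E *ᵥ Pi.single i 1) := by
    conv_lhs => rw [← Finset.univ_sum_single (F *ᵥ v), mulVec_sum]
    refine Finset.sum_congr rfl fun i _ => ?_
    rw [← mulVec_smul, ← Pi.single_smul, smul_eq_mul, mul_one]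
  rw [← sub_add_cancel v (E *ᵥ (F *ᵥ v)), hsum]
  rw [hsum] at hker
  exact add_mem (Submodule.subset_span ⟨0, hker⟩)
    (sum_mem fun i _ => Submodule.smul_mem _ _ (Submodule.subset_span ⟨d i, hcol i⟩))

end Corner

/-! ### Signs of permutations of roots of unity -/

section RootsOfUnity

variable {k : Type*} [Field k] {m : ℕ}

theorem isPrimitiveRoot_neg_of_odd (h2 : (2 : k) ≠ 0) (hm : Odd m) {ζ : k}
    (hζ : IsPrimitiveRoot ζ m) : IsPrimitiveRoot (-ζ) (2 * m) := by
  have hneg : orderOf (-1 : k) = 2 :=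
    orderOf_eq_prime (by norm_num) fun h => h2 (by linear_combination -h)
  rw [IsPrimitiveRoot.iff_orderOf, ← neg_one_mul,
    (Commute.all _ ζ).orderOf_mul_eq_mul_orderOf_of_coprime
      (by rw [hneg, ← hζ.eq_orderOf]; exact Nat.coprime_two_left.2 hm), hneg, ← hζ.eq_orderOf]

theorem forall_mem_zpowers_of_isPrimitiveRoot {n : ℕ} [NeZero n] {ξ : rootsOfUnity n k}
    (hξ : IsPrimitiveRoot ((ξ : kˣ) : k) n) (t : rootsOfUnity n k) :
    t ∈ Subgroup.zpowers ξ := by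
  obtain ⟨i, -, hi⟩ := (IsPrimitiveRoot.coe_units_iff.1 hξ).eq_pow_of_mem_rootsOfUnity t.2
  exact ⟨i, Subtype.ext (by simpa only [zpow_natCast, Subgroup.coe_pow] using hi)⟩

end RootsOfUnity

section MonomialPerm

open Equiv

theorem sign_mulLeft_of_forall_mem_zpowers {G : Type*} [Group G] [Fintype G] [DecidableEq G]
    {g : G} (hg : ∀ x, x ∈ Subgroup.zpowers g) (hG : Even (Fintype.card G)) :
    Perm.sign (Equiv.mulLeft g) = -1 := by
  have hne : g ≠ 1 := by
    rintro rfl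
    have : Fintype.card G = 1 := Fintype.card_eq_one_iff.2 ⟨1, fun x => by simpa using hg x⟩
    exact Nat.not_even_one (this ▸ hG)
  have hmove (x : G) : Equiv.mulLeft g x ≠ x := by simpa using hne
  have hcycle : (Equiv.mulLeft g).IsCycle := by
    refine ⟨1, hmove 1, fun y _ => ?_⟩
    obtain ⟨i, rfl⟩ := hg y
    exact ⟨i, by simp only [Equiv.zpow_mulLeft, Equiv.coe_mulLeft, mul_one]⟩
  have hsupp : (Equiv.mulLeft g).support = Finset.univ :=
    Finset.eq_univ_of_forall fun x => Perm.mem_support.2 (hmove x)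
  rw [hcycle.sign, hsupp, Finset.card_univ, hG.neg_one_pow]

theorem sign_mulLeft_rootsOfUnity {k : Type*} [Field k] [DecidableEq k] {m : ℕ} [NeZero m]
    [Fintype (rootsOfUnity (2 * m) k)] {ξ : rootsOfUnity (2 * m) k}
    (hξ : IsPrimitiveRoot ((ξ : kˣ) : k) (2 * m)) (t : rootsOfUnity (2 * m) k) :
    ((Perm.sign (Equiv.mulLeft t) : ℤ) : k) = ((t : kˣ) : k) ^ m := by
  have hcard : Even (Fintype.card (rootsOfUnity (2 * m) k)) := by
    rw [← Nat.card_eq_fintype_card, hξ.card_rootsOfUnity]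
    exact even_two_mul m
  have hξm : ((ξ : kˣ) : k) ^ m = -1 :=
    (hξ.pow (Nat.pos_of_neZero _) (mul_comm 2 m)).eq_neg_one_of_two_right
  obtain ⟨i, rfl⟩ := mem_powers_iff_mem_zpowers.2 (forall_mem_zpowers_of_isPrimitiveRoot hξ t)
  rw [← Equiv.pow_mulLeft, map_pow,
    sign_mulLeft_of_forall_mem_zpowers (forall_mem_zpowers_of_isPrimitiveRoot hξ) hcard]
  push_cast
  rw [pow_right_comm, hξm]

variable {ι G : Type*} [Group G]

/-- The permutation of `ι × G` induced by the monomial matrix over `G` with entry `b i` in position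
`(σ i, i)`. -/
def monomialPerm (σ : Perm ι) (b : ι → G) : Perm (ι × G) :=
  Equiv.prodShear σ fun i => Equiv.mulLeft (b i)

theorem monomialPerm_apply (σ : Perm ι) (b : ι → G) (p : ι × G) :
    monomialPerm σ b p = (σ p.1, b p.1 * p.2) := rfl

theorem sign_monomialPerm [Fintype ι] [DecidableEq ι] [Fintype G] [DecidableEq G]
    (hG : Even (Fintype.card G)) (σ : Perm ι) (b : ι → G) :
    Perm.sign (monomialPerm σ b) = ∏ i, Perm.sign (Equiv.mulLeft (b i)) := by
  have hfactor : monomialPerm σ b =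
      Equiv.prodCongrLeft (fun _ : G => σ) * Equiv.prodCongrRight fun i => Equiv.mulLeft (b i) :=
    rfl
  rw [hfactor, Perm.sign_mul, Perm.sign_prodCongrLeft, Perm.sign_prodCongrRight,
    Finset.prod_const, Finset.card_univ, Int.units_pow_eq_pow_mod_two, Nat.even_iff.1 hG, pow_zero,
    one_mul]

/-- The action of `G` on `ι × G` by multiplication on the second factor. -/
def shiftPerm : G →* Perm (ι × G) where
  toFun t := monomialPerm 1 fun _ => t
  map_one' := by ext p : 1; simp only [monomialPerm_apply, Perm.one_apply, one_mul]
  map_mul' s t := by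
    ext p : 1
    simp only [Perm.mul_apply, monomialPerm_apply, Perm.one_apply, mul_assoc]

theorem shiftPerm_apply (t : G) (p : ι × G) : shiftPerm t p = (p.1, t * p.2) := rfl

theorem monomialPerm_mul_shiftPerm {G : Type*} [CommGroup G] (σ : Perm ι) (b : ι → G) (t : G) :
    monomialPerm σ b * shiftPerm t = shiftPerm t * monomialPerm σ b := by
  ext p : 1
  simp only [Perm.mul_apply, monomialPerm_apply, shiftPerm_apply, mul_left_comm]

end MonomialPerm

section PermMatrix

open Equiv

variable {I N R : Type*} [Fintype I] [DecidableEq I] [CommRing R]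

theorem permMatrixHom_apply_apply (σ : Perm I) (i j : I) :
    (permMatrixHom σ : Matrix I I R) i j = if i = σ j then 1 else 0 := by
  simp [permMatrixHom_apply, PEquiv.toMatrix_apply, Equiv.symm_apply_eq]

theorem mul_permMatrixHom_apply (A : Matrix N I R) (σ : Perm I) (n : N) (i : I) :
    (A * permMatrixHom (R := R) σ) n i = A n (σ i) := by
  simp only [mul_apply, permMatrixHom_apply_apply, mul_ite, mul_one, mul_zero, Finset.sum_ite_eq',
    Finset.mem_univ, if_true]

theorem transpose_permMatrixHom (σ : Perm I) :
    (permMatrixHom (R := R) σ)ᵀ = permMatrixHom (R := R) σ⁻¹ :=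
  transpose_permMatrix _

theorem det_permMatrixHom (σ : Perm I) : (permMatrixHom (R := R) σ).det = Perm.sign σ := by
  rw [permMatrixHom_apply, det_permutation, Perm.sign_inv]

theorem permMatrixHom_mul_diagonal {d d' : I → R} {σ : Perm I} (h : ∀ i, d' (σ i) = d i) :
    permMatrixHom (R := R) σ * diagonal d = diagonal d' * permMatrixHom (R := R) σ := by
  ext i j
  rw [mul_diagonal, diagonal_mul, permMatrixHom_apply_apply]
  split_ifs with hij
  · rw [hij, h, one_mul, mul_one]
  · rw [zero_mul, mul_zero]

end PermMatrix

section WeightDiagonal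

open Equiv

variable {k : Type*} [Field k] {m : ℕ}

variable (k m) in
/-- The element `-1` of the group of `2m`-th roots of unity. -/
def negOne : rootsOfUnity (2 * m) k := ⟨-1, by rw [mem_rootsOfUnity, pow_mul, neg_one_sq, one_pow]⟩

theorem coe_negOne_mul (t : rootsOfUnity (2 * m) k) :
    (((negOne k m * t : rootsOfUnity (2 * m) k) : kˣ) : k) = -((t : kˣ) : k) := by
  simp [negOne]

theorem negOne_mul_negOne : negOne k m * negOne k m = 1 :=
  Subtype.ext (by simp [negOne])

variable [DecidableEq k] {ι N : Type*} [DecidableEq ι]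

/-- The diagonal matrix with eigenvalues `a i * t`, one for each `i : ι` and each `2m`-th root of
unity `t`. -/
def weightDiagonal (m : ℕ) : (ι → k) →ₗ[k]
    Matrix (ι × rootsOfUnity (2 * m) k) (ι × rootsOfUnity (2 * m) k) k where
  toFun a := diagonal fun p => a p.1 * (p.2 : kˣ)
  map_add' a b := by simp only [Pi.add_apply, add_mul, diagonal_add]
  map_smul' s a := by
    simp only [Pi.smul_apply, smul_eq_mul, mul_assoc, RingHom.id_apply, ← diagonal_smul]
    rfl

theorem weightDiagonal_apply (a : ι → k) :
    weightDiagonal m a = diagonal fun p : ι × rootsOfUnity (2 * m) k => a p.1 * (p.2 : kˣ) := rfl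

theorem transpose_weightDiagonal (a : ι → k) : (weightDiagonal m a)ᵀ = weightDiagonal m a :=
  diagonal_transpose _

theorem weightDiagonal_injective : Function.Injective (weightDiagonal (ι := ι) (k := k) m) := by
  intro a b hab
  ext i
  simpa using congrFun (diagonal_injective hab) (i, 1)

variable [Fintype ι] [Fintype (rootsOfUnity (2 * m) k)]

theorem weightDiagonal_mul_comm (a b : ι → k) :
    weightDiagonal m a * weightDiagonal m b = weightDiagonal m b * weightDiagonal m a := by
  rw [weightDiagonal_apply, weightDiagonal_apply, diagonal_mul_diagonal, diagonal_mul_diagonal]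
  simp only [mul_comm]

theorem weightDiagonal_pow (a : ι → k) :
    weightDiagonal m a ^ (2 * m + 1) = weightDiagonal m fun i => a i ^ (2 * m + 1) := by
  rw [weightDiagonal_apply, weightDiagonal_apply, diagonal_pow]
  congr 1 with p
  have hp : ((p.2 : kˣ) : k) ^ (2 * m) = 1 := (mem_rootsOfUnity' _ _).1 p.2.2
  rw [Pi.pow_apply, mul_pow, pow_succ ((p.2 : kˣ) : k), hp, one_mul]

variable (ι) in
/-- The permutation matrices of multiplication by roots of unity on the second factor. -/
def shiftMatrix : rootsOfUnity (2 * m) k →*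
    Matrix (ι × rootsOfUnity (2 * m) k) (ι × rootsOfUnity (2 * m) k) k :=
  permMatrixHom.comp shiftPerm

theorem shiftMatrix_apply (t : rootsOfUnity (2 * m) k) (p q : ι × rootsOfUnity (2 * m) k) :
    shiftMatrix ι t p q = if p = (q.1, t * q.2) then 1 else 0 :=
  permMatrixHom_apply_apply _ p q

theorem permMatrixHom_mul_weightDiagonal {σ : Perm ι} {b : ι → rootsOfUnity (2 * m) k}
    {a a' : ι → k} (h : ∀ i, a' (σ i) * (b i : kˣ) = a i) :
    permMatrixHom (monomialPerm σ b) * weightDiagonal m a =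
      weightDiagonal m a' * permMatrixHom (monomialPerm σ b) := by
  refine permMatrixHom_mul_diagonal fun p => ?_
  rw [monomialPerm_apply, ← h, Subgroup.coe_mul, Units.val_mul, mul_assoc]

theorem permMatrixHom_monomialPerm_mul_shiftMatrix (σ : Perm ι) (b : ι → rootsOfUnity (2 * m) k)
    (t : rootsOfUnity (2 * m) k) :
    permMatrixHom (monomialPerm σ b) * shiftMatrix ι t =
      shiftMatrix ι t * permMatrixHom (monomialPerm σ b) := by
  rw [shiftMatrix, MonoidHom.comp_apply, ← map_mul, monomialPerm_mul_shiftPerm, map_mul]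

theorem mul_shiftMatrix_apply (A : Matrix N (ι × rootsOfUnity (2 * m) k) k)
    (t : rootsOfUnity (2 * m) k) (n : N) (p : ι × rootsOfUnity (2 * m) k) :
    (A * shiftMatrix ι t : Matrix N (ι × rootsOfUnity (2 * m) k) k) n p = A n (p.1, t * p.2) :=
  mul_permMatrixHom_apply A _ n p

theorem transpose_shiftMatrix (t : rootsOfUnity (2 * m) k) :
    (shiftMatrix ι t : Matrix (ι × rootsOfUnity (2 * m) k) _ k)ᵀ = shiftMatrix ι t⁻¹ := by
  rw [shiftMatrix, MonoidHom.comp_apply, MonoidHom.comp_apply, transpose_permMatrixHom,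
    map_inv shiftPerm]

theorem shiftMatrix_mul_weightDiagonal {t : rootsOfUnity (2 * m) k} {s : k}
    (hst : s * (t : kˣ) = 1) (a : ι → k) :
    shiftMatrix ι t * weightDiagonal m a = s • (weightDiagonal m a * shiftMatrix ι t) := by
  rw [← Matrix.smul_mul, ← map_smul]
  refine permMatrixHom_mul_weightDiagonal fun i => ?_
  rw [Pi.smul_apply, smul_eq_mul, mul_right_comm, hst, one_mul, Perm.one_apply]

end WeightDiagonal

/-! ### Frames -/

section Frame

open Equiv

variable {k N : Type*} [Field k] [DecidableEq k] [Fintype N] {m : ℕ} {ι : Type*}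
  [Fintype ι] [DecidableEq ι] [Fintype (rootsOfUnity (2 * m) k)] {J u : Matrix N N k}
  {c : Submodule k (Matrix N N k)} {z : rootsOfUnity (2 * m) k}
  {E : Matrix N (ι × rootsOfUnity (2 * m) k) k}

/-- The columns of `E`, indexed by `ι` and the `2m`-th roots of unity, are joint eigenvectors of
`c`. The element `u` permutes the columns with the same first index, and so does taking the dual
with respect to the bilinear form `J`: the column `(i, t)` pairs to `1` with the column `(i, -t)`
and to `0` with all others. -/
structure IsFrame (J u : Matrix N N k) (c : Submodule k (Matrix N N k)) (z : rootsOfUnity (2 * m) k)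
    (E : Matrix N (ι × rootsOfUnity (2 * m) k) k) : Prop where
  gram : Eᵀ * J * E = shiftMatrix ι (negOne k m)
  mul_left : u * E = E * shiftMatrix ι z⁻¹
  weight : ∀ x ∈ c, ∃ a : ι → k, x * E = E * weightDiagonal m a

theorem isFrame_of_isEmpty [IsEmpty ι] (E : Matrix N (ι × rootsOfUnity (2 * m) k) k) :
    IsFrame J u c z E :=
  ⟨Subsingleton.elim _ _, Subsingleton.elim _ _, fun _ _ => ⟨0, Subsingleton.elim _ _⟩⟩

/-- The left inverse of a frame `E` given by the bilinear form `J`. -/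
def dualFrame (J : Matrix N N k) (E : Matrix N (ι × rootsOfUnity (2 * m) k) k) :
    Matrix (ι × rootsOfUnity (2 * m) k) N k :=
  shiftMatrix ι (negOne k m) * Eᵀ * J

theorem shiftMatrix_negOne_mul_self :
    shiftMatrix ι (negOne k m) * shiftMatrix ι (negOne k m) = 1 := by
  rw [← map_mul, negOne_mul_negOne, map_one]

theorem shiftMatrix_negOne_mul_dualFrame :
    shiftMatrix ι (negOne k m) * dualFrame J E = Eᵀ * J := by
  rw [dualFrame, Matrix.mul_assoc _ Eᵀ, ← Matrix.mul_assoc, shiftMatrix_negOne_mul_self,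
    Matrix.one_mul]

theorem transpose_dualFrame_mul (hJ : Jᵀ = J) :
    (dualFrame J E)ᵀ * shiftMatrix ι (negOne k m) = J * E := by
  have h := congrArg transpose (shiftMatrix_negOne_mul_dualFrame (J := J) (E := E))
  rwa [transpose_mul, transpose_mul, transpose_transpose, hJ, transpose_shiftMatrix,
    inv_eq_of_mul_eq_one_left negOne_mul_negOne] at h

namespace IsFrame

theorem dualFrame_mul (h : IsFrame J u c z E) : dualFrame J E * E = 1 := by
  rw [dualFrame, Matrix.mul_assoc, Matrix.mul_assoc, ← Matrix.mul_assoc Eᵀ, h.gram,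
    shiftMatrix_negOne_mul_self]

theorem card_mul_card_le (h : IsFrame J u c z E) :
    Fintype.card ι * Fintype.card (rootsOfUnity (2 * m) k) ≤ Fintype.card N := by
  rw [← Fintype.card_prod, ← rank_one (R := k), ← h.dualFrame_mul]
  exact (rank_mul_le_left _ _).trans (rank_le_card_width _)

theorem dualFrame_mul_comm (h : IsFrame J u c z E) (huJ : uᵀ * J * u = J) :
    dualFrame J E * u = shiftMatrix ι z⁻¹ * dualFrame J E := by
  have hEu : Eᵀ * J * u = shiftMatrix ι z⁻¹ * (Eᵀ * J) :=
    calc Eᵀ * J * u = shiftMatrix ι z⁻¹ * (E * shiftMatrix ι z⁻¹)ᵀ * J * u := by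
          rw [transpose_mul, transpose_shiftMatrix, ← Matrix.mul_assoc, ← map_mul, inv_inv,
            inv_mul_cancel, map_one, Matrix.one_mul]
      _ = shiftMatrix ι z⁻¹ * (Eᵀ * (uᵀ * J * u)) := by
          rw [← h.mul_left, transpose_mul]
          simp only [Matrix.mul_assoc]
      _ = shiftMatrix ι z⁻¹ * (Eᵀ * J) := by rw [huJ]
  calc dualFrame J E * u = shiftMatrix ι (negOne k m) * (Eᵀ * J * u) := by
        simp only [dualFrame, Matrix.mul_assoc]
    _ = shiftMatrix ι z⁻¹ * dualFrame J E := by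
        rw [hEu, ← Matrix.mul_assoc, ← map_mul, mul_comm (negOne k m), map_mul]
        simp only [dualFrame, Matrix.mul_assoc]

end IsFrame

theorem shiftMatrix_negOne_mul_weightDiagonal (a : ι → k) :
    shiftMatrix ι (negOne k m) * weightDiagonal m a =
      -(weightDiagonal m a * shiftMatrix ι (negOne k m)) := by
  rw [shiftMatrix_mul_weightDiagonal (s := -1) (by simp [negOne]), neg_one_smul]

theorem dualFrame_mul_of_mul_eq {x : Matrix N N k} (hx : xᵀ * J + J * x = 0) {a : ι → k}
    (hxE : x * E = E * weightDiagonal m a) :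
    dualFrame J E * x = weightDiagonal m a * dualFrame J E :=
  calc dualFrame J E * x = shiftMatrix ι (negOne k m) * Eᵀ * (J * x) := by
        simp only [dualFrame, Matrix.mul_assoc]
    _ = -(shiftMatrix ι (negOne k m) * (x * E)ᵀ * J) := by
        rw [← neg_eq_of_add_eq_zero_right hx, transpose_mul, Matrix.mul_neg]
        simp only [Matrix.mul_assoc]
    _ = weightDiagonal m a * dualFrame J E := by
        rw [hxE, transpose_mul, transpose_weightDiagonal, ← Matrix.mul_assoc,
          shiftMatrix_negOne_mul_weightDiagonal]
        simp only [dualFrame, Matrix.neg_mul, neg_neg, Matrix.mul_assoc]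

/-- The matrix with eigenvalue `a i * t` on the column `(i, t)` of a frame `E`, and `0` on the
orthogonal complement of `E`. The range of this map is to be the given Cartan subspace. -/
def cartanMap (J : Matrix N N k) (E : Matrix N (ι × rootsOfUnity (2 * m) k) k) :
    (ι → k) →ₗ[k] Matrix N N k where
  toFun a := E * weightDiagonal m a * dualFrame J E
  map_add' a b := by rw [map_add, Matrix.mul_add, Matrix.add_mul]
  map_smul' s a := by rw [map_smul, Matrix.mul_smul, Matrix.smul_mul, RingHom.id_apply]

theorem cartanMap_apply (a : ι → k) :
    cartanMap J E a = E * weightDiagonal m a * dualFrame J E := rfl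

theorem transpose_cartanMap_mul_add (hJ : Jᵀ = J) (a : ι → k) :
    (cartanMap J E a)ᵀ * J + J * cartanMap J E a = 0 := by
  have hJT : J * cartanMap J E a =
      (dualFrame J E)ᵀ * (shiftMatrix ι (negOne k m) * weightDiagonal m a) * dualFrame J E := by
    rw [cartanMap_apply, ← Matrix.mul_assoc, ← Matrix.mul_assoc, ← transpose_dualFrame_mul hJ]
    simp only [Matrix.mul_assoc]
  have hTJ : (cartanMap J E a)ᵀ * J =
      (dualFrame J E)ᵀ * (weightDiagonal m a * shiftMatrix ι (negOne k m)) * dualFrame J E := by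
    rw [cartanMap_apply, transpose_mul, transpose_mul, transpose_weightDiagonal]
    simp only [Matrix.mul_assoc, shiftMatrix_negOne_mul_dualFrame]
  rw [hTJ, hJT, shiftMatrix_negOne_mul_weightDiagonal, Matrix.mul_neg, Matrix.neg_mul,
    add_neg_cancel]

theorem span_range_cartanMap_single :
    Submodule.span k (Set.range fun j => cartanMap J E (Pi.single j 1)) =
      LinearMap.range (cartanMap J E) := by
  rw [LinearMap.range_eq_map, ← (Pi.basisFun k (ι)).span_eq, Submodule.map_span,
    ← Set.range_comp]
  simp only [Function.comp_def, Pi.basisFun_apply]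

namespace IsFrame

theorem cartanMap_injective (h : IsFrame J u c z E) : Function.Injective (cartanMap J E) :=
  (corner_injective h.dualFrame_mul).comp weightDiagonal_injective

theorem linearIndependent_cartanMap_single (h : IsFrame J u c z E) :
    LinearIndependent k fun j => cartanMap J E (Pi.single j 1) := by
  have hbasis := (Pi.basisFun k (ι)).linearIndependent.map' _
    (LinearMap.ker_eq_bot.2 h.cartanMap_injective)
  simpa only [Function.comp_def, Pi.basisFun_apply] using hbasis

theorem finrank_range_cartanMap (h : IsFrame J u c z E) :
    Module.finrank k (LinearMap.range (cartanMap J E)) = Fintype.card ι := by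
  rw [LinearMap.finrank_range_of_inj h.cartanMap_injective, Module.finrank_fintype_fun_eq_card]

theorem cartanMap_mul_comm (h : IsFrame J u c z E) (a b : ι → k) :
    cartanMap J E a * cartanMap J E b = cartanMap J E b * cartanMap J E a := by
  simp only [cartanMap_apply, corner_mul_corner h.dualFrame_mul, weightDiagonal_mul_comm a b]

theorem cartanMap_mul_eq_zero_iff (h : IsFrame J u c z E) {a b : ι → k} :
    cartanMap J E a * cartanMap J E b = 0 ↔ a * b = 0 := by
  have hdiag : weightDiagonal m a * weightDiagonal m b = 0 ↔ a * b = 0 := by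
    simp [weightDiagonal_apply, funext_iff]
  rw [cartanMap_apply, cartanMap_apply, corner_mul_corner h.dualFrame_mul, ← hdiag,
    ← (corner_injective h.dualFrame_mul).eq_iff, Matrix.mul_zero, Matrix.zero_mul]

theorem mul_cartanMap (h : IsFrame J u c z E) (huJ : uᵀ * J * u = J) (a : ι → k) :
    u * cartanMap J E a = ((z : kˣ) : k) • (cartanMap J E a * u) :=
  calc u * cartanMap J E a = E * (shiftMatrix ι z⁻¹ * weightDiagonal m a) * dualFrame J E := by
        rw [cartanMap_apply, ← Matrix.mul_assoc, ← Matrix.mul_assoc, h.mul_left, Matrix.mul_assoc E]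
    _ = ((z : kˣ) : k) • (cartanMap J E a * u) := by
        rw [shiftMatrix_mul_weightDiagonal (s := ((z : kˣ) : k)) (by simp), Matrix.mul_smul,
          Matrix.smul_mul, cartanMap_apply, Matrix.mul_assoc _ (dualFrame J E),
          h.dualFrame_mul_comm huJ]
        simp only [Matrix.mul_assoc]

variable [DecidableEq N]

theorem cartanMap_pow (h : IsFrame J u c z E) (a : ι → k) :
    cartanMap J E a ^ (2 * m + 1) = cartanMap J E fun i => a i ^ (2 * m + 1) := by
  simp only [cartanMap_apply, corner_pow_succ h.dualFrame_mul, weightDiagonal_pow]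

theorem isSemisimpleMat_cartanMap (h : IsFrame J u c z E) (a : ι → k) :
    IsSemisimpleMat (cartanMap J E a) :=
  isSemisimpleMat_mul_diagonal_mul h.dualFrame_mul _

end IsFrame

end Frame

/-! ### Chains of joint eigenvectors -/

section Skew

variable {k N : Type*} [Field k] [Fintype N] {J x : Matrix N N k}

theorem add_eigenvalues_eq_zero (hx : xᵀ * J + J * x = 0) {v w : N → k} {a b : k}
    (hv : x *ᵥ v = a • v) (hw : x *ᵥ w = b • w) (hvw : v ⬝ᵥ J *ᵥ w ≠ 0) : a + b = 0 := by
  refine (mul_eq_zero.1 ?_).resolve_right hvw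
  calc (a + b) * (v ⬝ᵥ J *ᵥ w) = (a • v) ⬝ᵥ J *ᵥ w + v ⬝ᵥ J *ᵥ (b • w) := by
        rw [add_mul, smul_dotProduct, mulVec_smul, dotProduct_smul, smul_eq_mul, smul_eq_mul]
    _ = v ⬝ᵥ (xᵀ * J + J * x) *ᵥ w := by
        rw [← hv, ← hw, add_mulVec, dotProduct_add, ← mulVec_mulVec, ← mulVec_mulVec,
          dotProduct_mulVec v xᵀ, vecMul_transpose]
    _ = 0 := by rw [hx, zero_mulVec, dotProduct_zero]

theorem dotProduct_mulVec_of_transpose_mul_mul {g : Matrix N N k} (hg : gᵀ * J * g = J)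
    (v w : N → k) : (g *ᵥ v) ⬝ᵥ J *ᵥ (g *ᵥ w) = v ⬝ᵥ J *ᵥ w := by
  rw [← vecMul_transpose, ← dotProduct_mulVec, mulVec_mulVec, mulVec_mulVec, hg]

variable {c : Submodule k (Matrix N N k)}

theorem IsWeightVector.mulVec_of_commute {P : Matrix N N k} (hcP : ∀ x ∈ c, x * P = P * x)
    {χ : c → k} {v : N → k} (hv : IsWeightVector c χ v) : IsWeightVector c χ (P *ᵥ v) := fun x => by
  rw [mulVec_mulVec, hcP x x.2, ← mulVec_mulVec, hv, mulVec_smul]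

variable [DecidableEq N]

theorem exists_isWeightVector_dotProduct_ne_zero (hJ : IsUnit J.det)
    (hcomm : ∀ x ∈ c, ∀ y ∈ c, x * y = y * x) (hss : ∀ x ∈ c, IsSemisimpleMat x)
    {e : N → k} (he : e ≠ 0) : ∃ χ w, IsWeightVector c χ w ∧ e ⬝ᵥ J *ᵥ w ≠ 0 := by
  have hne : dotProductBilin k k (e ᵥ* J) ≠ 0 := fun h =>
    he (Matrix.eq_zero_of_vecMul_eq_zero hJ.ne_zero (dotProduct_eq_zero _ (LinearMap.congr_fun h)))
  obtain ⟨χ, w, hw, hew⟩ := exists_isWeightVector_apply_ne_zero hcomm hss hne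
  exact ⟨χ, w, hw, by rwa [dotProduct_mulVec]⟩

theorem exists_isWeightVector_pair (hJ : IsUnit J.det) (hskew : ∀ x ∈ c, xᵀ * J + J * x = 0)
    (hcomm : ∀ x ∈ c, ∀ y ∈ c, x * y = y * x) (hss : ∀ x ∈ c, IsSemisimpleMat x)
    {P : Matrix N N k} (hP : P * P = P) (hPJ : Pᵀ * J = J * P) (hcP : ∀ x ∈ c, x * P = P * x)
    {x₀ : c} (hx₀ : x₀.1 * P ≠ 0) :
    ∃ χ e f, IsWeightVector c χ e ∧ IsWeightVector c (-χ) f ∧ P *ᵥ e = e ∧ P *ᵥ f = f ∧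
      e ⬝ᵥ J *ᵥ f = 1 ∧ χ x₀ ≠ 0 := by
  have hlin : toLin' (x₀.1 * P) ≠ 0 := fun h => hx₀ (toLin'.injective (by rw [h, map_zero]))
  obtain ⟨χ, v, hv, hv0⟩ := exists_isWeightVector_apply_ne_zero hcomm hss hlin
  have he := hv.mulVec_of_commute hcP
  rw [toLin'_apply, ← mulVec_mulVec, he] at hv0
  obtain ⟨χ', w, hw, hew⟩ := exists_isWeightVector_dotProduct_ne_zero hJ hcomm hss
    (smul_ne_zero_iff.1 hv0).2
  have hχ' : χ' = -χ := funext fun x =>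
    eq_neg_of_add_eq_zero_right (add_eigenvalues_eq_zero (hskew x x.2) (he x) (hw x) hew)
  have hePw : P *ᵥ v ⬝ᵥ J *ᵥ (P *ᵥ w) = P *ᵥ v ⬝ᵥ J *ᵥ w := by
    rw [mulVec_mulVec, ← hPJ, ← mulVec_mulVec, dotProduct_mulVec _ Pᵀ, vecMul_transpose,
      mulVec_mulVec, hP]
  refine ⟨χ, P *ᵥ v, (P *ᵥ v ⬝ᵥ J *ᵥ w)⁻¹ • (P *ᵥ w), he, fun x => ?_, ?_, ?_, ?_,
    (smul_ne_zero_iff.1 hv0).1⟩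
  · rw [mulVec_smul, hw.mulVec_of_commute hcP, hχ', smul_comm]
  · rw [mulVec_mulVec, hP]
  · rw [mulVec_smul, mulVec_mulVec, hP]
  · rw [mulVec_smul, dotProduct_smul, hePw, smul_eq_mul, inv_mul_cancel₀ hew]

end Skew

section Chain

variable {k : Type*} [Field k] {m : ℕ} {z : rootsOfUnity (2 * m) k}

theorem negOne_pow_of_odd (hm : Odd m) : negOne k m ^ m = negOne k m :=
  Subtype.ext (by simp [negOne, hm.neg_one_pow])

theorem pow_eq_one_of_isPrimitiveRoot (hz : IsPrimitiveRoot ((z : kˣ) : k) m) : z ^ m = 1 :=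
  Subtype.ext (Units.ext (by simpa using hz.pow_eq_one))

theorem negOne_mul_inv_pow (hm : Odd m) (hz : IsPrimitiveRoot ((z : kˣ) : k) m) :
    (negOne k m * z⁻¹) ^ m = negOne k m := by
  rw [mul_pow, inv_pow, pow_eq_one_of_isPrimitiveRoot hz, inv_one, mul_one, negOne_pow_of_odd hm]

theorem isPrimitiveRoot_negOne_mul_inv (h2 : (2 : k) ≠ 0) (hm : Odd m)
    (hz : IsPrimitiveRoot ((z : kˣ) : k) m) :
    IsPrimitiveRoot (((negOne k m * z⁻¹ : rootsOfUnity (2 * m) k) : kˣ) : k) (2 * m) := by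
  rw [coe_negOne_mul]
  exact isPrimitiveRoot_neg_of_odd h2 hm (by simpa using hz.inv)

theorem exists_eq_negOne_mul_inv_pow (h2 : (2 : k) ≠ 0) (hm : Odd m)
    (hz : IsPrimitiveRoot ((z : kˣ) : k) m) (t : rootsOfUnity (2 * m) k) :
    ∃ n : ℕ, (negOne k m * z⁻¹) ^ n = t := by
  have : NeZero (2 * m) := ⟨mul_ne_zero two_ne_zero hm.pos.ne'⟩
  exact mem_powers_iff_mem_zpowers.2
    (forall_mem_zpowers_of_isPrimitiveRoot (isPrimitiveRoot_negOne_mul_inv h2 hm hz) t)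

theorem exists_monoidHom_inv_eq (h2 : (2 : k) ≠ 0) (hm : Odd m)
    (hz : IsPrimitiveRoot ((z : kˣ) : k) m) {M : Type*} [Monoid M] {u : M} (hu : u ^ m = 1) :
    ∃ φ : rootsOfUnity (2 * m) k →* M, φ (negOne k m) = 1 ∧ φ z⁻¹ = u := by
  have hη (t) : t ∈ Subgroup.zpowers (negOne k m * z⁻¹) :=
    let ⟨n, hn⟩ := exists_eq_negOne_mul_inv_pow h2 hm hz t
    hn ▸ Subgroup.npow_mem_zpowers _ n
  let U : Mˣ := Units.ofPowEqOne u m hu hm.pos.ne'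
  have hU : U ^ m = 1 := Units.pow_ofPowEqOne hu hm.pos.ne'
  have hord : orderOf U ∣ orderOf (negOne k m * z⁻¹) := by
    rw [← (IsPrimitiveRoot.coe_submonoidClass_iff.1 (IsPrimitiveRoot.coe_units_iff.1
      (isPrimitiveRoot_negOne_mul_inv h2 hm hz))).eq_orderOf]
    exact (orderOf_dvd_of_pow_eq_one hU).mul_left 2
  let φ := monoidHomOfForallMemZpowers hη hord
  have hφη : φ (negOne k m * z⁻¹) = U := monoidHomOfForallMemZpowers_apply_gen hη hord
  have hφneg : φ (negOne k m) = 1 := by rw [← negOne_mul_inv_pow hm hz, map_pow, hφη, hU]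
  refine ⟨(Units.coeHom M).comp φ, ?_, ?_⟩
  · rw [MonoidHom.comp_apply, hφneg, map_one]
  · rw [map_mul, hφneg, one_mul] at hφη
    rw [MonoidHom.comp_apply, hφη]
    rfl

variable {N : Type*} [Fintype N] {J u : Matrix N N k} {c : Submodule k (Matrix N N k)}

/-- A chain of joint eigenvectors of `c`: the columns of a frame with a fixed first index. -/
structure IsEigenchain (J u : Matrix N N k) (c : Submodule k (Matrix N N k))
    (z : rootsOfUnity (2 * m) k) (w : rootsOfUnity (2 * m) k → N → k) : Prop where
  mulVec_apply : ∀ t, u *ᵥ w t = w (z⁻¹ * t)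
  weight : ∀ x ∈ c, ∃ a : k, ∀ t, x *ᵥ w t = (a * (t : kˣ)) • w t
  dotProduct_negOne : ∀ t, w t ⬝ᵥ J *ᵥ w (negOne k m * t) = 1
  dotProduct_of_ne : ∀ s t, s ≠ negOne k m * t → w s ⬝ᵥ J *ᵥ w t = 0

variable [DecidableEq N]

theorem mul_map_of_mul_eq_smul_mul (h2 : (2 : k) ≠ 0) (hm : Odd m)
    (hz : IsPrimitiveRoot ((z : kˣ) : k) m) {φ : rootsOfUnity (2 * m) k →* Matrix N N k}
    (hneg : φ (negOne k m) = 1) (hφ : φ z⁻¹ = u) {x : Matrix N N k}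
    (hx : u * x = ((z : kˣ) : k) • (x * u)) (t : rootsOfUnity (2 * m) k) :
    x * φ t = ((t : kˣ) : k) ^ (m + 1) • (φ t * x) := by
  have hη : (((negOne k m * z⁻¹ : rootsOfUnity (2 * m) k) : kˣ) : k) ^ (m + 1) *
      ((z : kˣ) : k) = 1 := by
    have h : (negOne k m * z⁻¹) ^ (m + 1) * z = 1 := by
      rw [pow_succ, negOne_mul_inv_pow hm hz, ← mul_assoc, negOne_mul_negOne, one_mul,
        inv_mul_cancel]
    rw [← Units.val_pow_eq_pow_val, ← Subgroup.coe_pow, ← Units.val_mul, ← Subgroup.coe_mul, h]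
    rfl
  have hφη : φ (negOne k m * z⁻¹) = u := by rw [map_mul, hneg, hφ, one_mul]
  obtain ⟨n, rfl⟩ := exists_eq_negOne_mul_inv_pow h2 hm hz t
  generalize negOne k m * z⁻¹ = η at hη hφη ⊢
  have hxη : x * φ η = ((η : kˣ) : k) ^ (m + 1) • (φ η * x) := by
    rw [hφη, hx, smul_smul, hη, one_smul]
  induction n with
  | zero => simp
  | succ n ih =>
    rw [pow_succ, map_mul, ← Matrix.mul_assoc, ih, Matrix.smul_mul, Matrix.mul_assoc, hxη,
      Matrix.mul_smul, smul_smul, ← Matrix.mul_assoc, Subgroup.coe_mul, Units.val_mul,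
      mul_pow (M := k)]

theorem exists_map_eq_pow (h2 : (2 : k) ≠ 0) (hm : Odd m) (hz : IsPrimitiveRoot ((z : kˣ) : k) m)
    {φ : rootsOfUnity (2 * m) k →* Matrix N N k} (hneg : φ (negOne k m) = 1) (hφ : φ z⁻¹ = u)
    (t : rootsOfUnity (2 * m) k) : ∃ n : ℕ, φ t = u ^ n := by
  obtain ⟨n, rfl⟩ := exists_eq_negOne_mul_inv_pow h2 hm hz t
  exact ⟨n, by rw [map_pow, map_mul, hneg, hφ, one_mul]⟩

theorem transpose_pow_mul_mul_pow (huJ : uᵀ * J * u = J) (n : ℕ) : (u ^ n)ᵀ * J * u ^ n = J := by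
  induction n with
  | zero => rw [pow_zero, transpose_one, Matrix.one_mul, Matrix.mul_one]
  | succ n ih =>
    calc (u ^ (n + 1))ᵀ * J * u ^ (n + 1) = uᵀ * ((u ^ n)ᵀ * J * u ^ n) * u := by
          rw [pow_succ, transpose_mul]
          simp only [Matrix.mul_assoc]
      _ = J := by rw [ih, huJ]

theorem pow_eq_one_or_eq_negOne (t : rootsOfUnity (2 * m) k) : t ^ m = 1 ∨ t ^ m = negOne k m := by
  have h : ((t : kˣ) : k) ^ m * ((t : kˣ) : k) ^ m = 1 := by
    rw [← pow_add, ← two_mul]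
    exact (mem_rootsOfUnity' _ _).1 t.2
  refine (mul_self_eq_one_iff.1 h).imp (fun h => ?_) fun h => ?_
  · exact Subtype.ext (Units.ext (by simpa using h))
  · exact Subtype.ext (Units.ext (by simpa [negOne] using h))

theorem negOne_ne_one (h2 : (2 : k) ≠ 0) : negOne k m ≠ 1 := fun h => h2 (by
  have h' : (-1 : k) = 1 := congrArg (fun t : rootsOfUnity (2 * m) k => ((t : kˣ) : k)) h
  linear_combination -h')

variable [DecidableEq k]

/-- The chain obtained from vectors `e` and `f` of opposite weights by the action of a cyclic group:
its vector at `t` starts from `e` or `f` according to `t ^ m = 1` or `t ^ m = -1`. -/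
def eigenchain (φ : rootsOfUnity (2 * m) k →* Matrix N N k) (e f : N → k)
    (t : rootsOfUnity (2 * m) k) : N → k :=
  φ t *ᵥ if t ^ m = 1 then e else f

theorem mulVec_eigenchain (h2 : (2 : k) ≠ 0) (hm : Odd m) (hz : IsPrimitiveRoot ((z : kˣ) : k) m)
    {φ : rootsOfUnity (2 * m) k →* Matrix N N k} (hneg : φ (negOne k m) = 1) (hφ : φ z⁻¹ = u)
    {x : Matrix N N k} (hux : u * x = ((z : kˣ) : k) • (x * u)) {a : k} {e f : N → k}
    (he : x *ᵥ e = a • e) (hf : x *ᵥ f = -a • f) (t : rootsOfUnity (2 * m) k) :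
    x *ᵥ eigenchain φ e f t = (a * (t : kˣ)) • eigenchain φ e f t := by
  rw [eigenchain, mulVec_mulVec, mul_map_of_mul_eq_smul_mul h2 hm hz hneg hφ hux, smul_mulVec,
    ← mulVec_mulVec, pow_succ, ← Units.val_pow_eq_pow_val, ← Subgroup.coe_pow]
  rcases pow_eq_one_or_eq_negOne t with ht | ht
  · rw [ht, if_pos rfl, he, mulVec_smul, smul_smul, mul_comm a]
    simp
  · rw [ht, if_neg (negOne_ne_one h2), hf, mulVec_smul, smul_smul]
    simp [negOne, mul_comm]

theorem mulVec_eigenchain_eq_self (h2 : (2 : k) ≠ 0) (hm : Odd m)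
    (hz : IsPrimitiveRoot ((z : kˣ) : k) m) {φ : rootsOfUnity (2 * m) k →* Matrix N N k}
    (hneg : φ (negOne k m) = 1) (hφ : φ z⁻¹ = u) {P : Matrix N N k} (hPu : Commute P u)
    {e f : N → k} (he : P *ᵥ e = e) (hf : P *ᵥ f = f) (t : rootsOfUnity (2 * m) k) :
    P *ᵥ eigenchain φ e f t = eigenchain φ e f t := by
  obtain ⟨n, hn⟩ := exists_map_eq_pow h2 hm hz hneg hφ t
  rw [eigenchain, hn, mulVec_mulVec, (hPu.pow_right n).eq, ← mulVec_mulVec]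
  split_ifs
  · rw [he]
  · rw [hf]

theorem isEigenchain_eigenchain (h2 : (2 : k) ≠ 0) (hm : Odd m)
    (hz : IsPrimitiveRoot ((z : kˣ) : k) m) (hJ : Jᵀ = J) (huJ : uᵀ * J * u = J)
    (hskew : ∀ x ∈ c, xᵀ * J + J * x = 0) (hux : ∀ x ∈ c, u * x = ((z : kˣ) : k) • (x * u))
    {φ : rootsOfUnity (2 * m) k →* Matrix N N k} (hneg : φ (negOne k m) = 1) (hφ : φ z⁻¹ = u)
    {χ : c → k} {e f : N → k} (he : IsWeightVector c χ e) (hf : IsWeightVector c (-χ) f)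
    (hef : e ⬝ᵥ J *ᵥ f = 1) {x₀ : c} (hx₀ : χ x₀ ≠ 0) :
    IsEigenchain J u c z (eigenchain φ e f) := by
  have hweight (x) (hx : x ∈ c) (t) :
      x *ᵥ eigenchain φ e f t = (χ ⟨x, hx⟩ * (t : kˣ)) • eigenchain φ e f t :=
    mulVec_eigenchain h2 hm hz hneg hφ (hux x hx) (he ⟨x, hx⟩) (hf ⟨x, hx⟩) t
  have hpair (s t) (hst : s ≠ negOne k m * t) :
      eigenchain φ e f s ⬝ᵥ J *ᵥ eigenchain φ e f t = 0 := by
    contrapose! hst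
    have h := add_eigenvalues_eq_zero (hskew x₀ x₀.2) (hweight x₀ x₀.2 s) (hweight x₀ x₀.2 t) hst
    rw [← mul_add, mul_eq_zero, or_iff_right hx₀] at h
    exact Subtype.ext (Units.ext (by rw [coe_negOne_mul]; exact eq_neg_of_add_eq_zero_left h))
  refine ⟨fun t => ?_, fun x hx => ⟨χ ⟨x, hx⟩, hweight x hx⟩, fun t => ?_, hpair⟩
  · rw [eigenchain, eigenchain, map_mul, hφ, mul_pow, inv_pow, pow_eq_one_of_isPrimitiveRoot hz,
      inv_one, one_mul, mulVec_mulVec]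
  · obtain ⟨n, hn⟩ := exists_map_eq_pow h2 hm hz hneg hφ t
    rw [eigenchain, eigenchain, map_mul, hneg, one_mul, hn,
      dotProduct_mulVec_of_transpose_mul_mul (transpose_pow_mul_mul_pow huJ n), mul_pow,
      negOne_pow_of_odd hm]
    rcases pow_eq_one_or_eq_negOne t with ht | ht
    · rw [ht, mul_one, if_pos rfl, if_neg (negOne_ne_one h2), hef]
    · rw [ht, negOne_mul_negOne, if_pos rfl, if_neg (negOne_ne_one h2), dotProduct_mulVec,
        dotProduct_comm, ← mulVec_transpose, hJ, hef]

end Chain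

section Extension

variable {k N : Type*} [Field k] [Fintype N] {m : ℕ} {J u : Matrix N N k}
  {c : Submodule k (Matrix N N k)} {z : rootsOfUnity (2 * m) k}

theorem transpose_mul_mul_apply {I : Type*} (A B : Matrix N I k) (p q : I) :
    (Aᵀ * J * B) p q = A.col p ⬝ᵥ J *ᵥ B.col q := by
  rw [Matrix.mul_assoc]
  rfl

/-- The columns of `E` together with those of a further chain `w`, which gets the first index
`0`. -/
def consFrame {s : ℕ} (w : rootsOfUnity (2 * m) k → N → k)
    (E : Matrix N (Fin s × rootsOfUnity (2 * m) k) k) :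
    Matrix N (Fin (s + 1) × rootsOfUnity (2 * m) k) k :=
  of fun n p => (Fin.cons (w p.2 n) fun i => E n (i, p.2) : Fin (s + 1) → k) p.1

variable [DecidableEq k] [Fintype (rootsOfUnity (2 * m) k)]

theorem transpose_consFrame_mul_mul (hJ : Jᵀ = J) {s : ℕ}
    {E : Matrix N (Fin s × rootsOfUnity (2 * m) k) k}
    (hE : Eᵀ * J * E = shiftMatrix (Fin s) (negOne k m)) {w : rootsOfUnity (2 * m) k → N → k}
    (hw : IsEigenchain J u c z w) (hEw : ∀ t, (Eᵀ * J) *ᵥ w t = 0) :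
    (consFrame w E)ᵀ * J * consFrame w E = shiftMatrix (Fin (s + 1)) (negOne k m) := by
  have hEw' (p t) : E.col p ⬝ᵥ J *ᵥ w t = 0 := by
    have := congrFun (hEw t) p
    rwa [← mulVec_mulVec] at this
  have hwE (p t) : w t ⬝ᵥ J *ᵥ E.col p = 0 := by
    rw [dotProduct_mulVec, dotProduct_comm, ← mulVec_transpose, hJ, hEw']
  ext ⟨i, t⟩ ⟨j, t'⟩
  rw [transpose_mul_mul_apply, shiftMatrix_apply]
  refine Fin.cases (Fin.cases ?_ (fun j => ?_) j) (fun i => Fin.cases ?_ (fun j => ?_) j) i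
  · change w t ⬝ᵥ J *ᵥ w t' = _
    simp only [Prod.mk.injEq, true_and]
    split_ifs with ht
    · have := hw.dotProduct_negOne t
      rwa [ht, ← mul_assoc, negOne_mul_negOne, one_mul, ← ht] at this
    · exact hw.dotProduct_of_ne t t' ht
  · exact (hwE (j, t') t).trans (if_neg fun h => Fin.succ_ne_zero j (congrArg Prod.fst h).symm).symm
  · exact (hEw' (i, t) t').trans (if_neg fun h => Fin.succ_ne_zero i (congrArg Prod.fst h)).symm
  · have := congrFun₂ hE (i, t) (j, t')
    rw [transpose_mul_mul_apply, shiftMatrix_apply] at this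
    simp only [Prod.mk.injEq, Fin.succ_inj] at this ⊢
    exact this

theorem IsFrame.cons (hJ : Jᵀ = J) {s : ℕ} {E : Matrix N (Fin s × rootsOfUnity (2 * m) k) k}
    (h : IsFrame J u c z E) {w : rootsOfUnity (2 * m) k → N → k} (hw : IsEigenchain J u c z w)
    (hEw : ∀ t, (Eᵀ * J) *ᵥ w t = 0) : IsFrame J u c z (consFrame w E) := by
  refine ⟨transpose_consFrame_mul_mul hJ h.gram hw hEw, ?_, fun x hx => ?_⟩
  · ext n ⟨i, t⟩
    rw [mul_shiftMatrix_apply]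
    refine Fin.cases ?_ (fun i => ?_) i
    · exact congrFun (hw.mulVec_apply t) n
    · have := congrFun₂ h.mul_left n (i, t)
      rwa [mul_shiftMatrix_apply] at this
  · obtain ⟨a, ha⟩ := h.weight x hx
    obtain ⟨b, hb⟩ := hw.weight x hx
    refine ⟨Fin.cons b a, ?_⟩
    ext n ⟨i, t⟩
    rw [weightDiagonal_apply, mul_diagonal]
    refine Fin.cases ?_ (fun i => ?_) i
    · exact (congrFun (hb t) n).trans (mul_comm _ _)
    · have := congrFun₂ ha n (i, t)
      rwa [weightDiagonal_apply, mul_diagonal] at this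

end Extension

/-! ### Frames of Cartan subspaces -/

section Complement

variable {k N : Type*} [Field k] [DecidableEq k] [Fintype N] [DecidableEq N] {m : ℕ} {ι : Type*}
  [Fintype ι] [DecidableEq ι] [Fintype (rootsOfUnity (2 * m) k)] {J u : Matrix N N k}
  {c : Submodule k (Matrix N N k)} {z : rootsOfUnity (2 * m) k}
  {E : Matrix N (ι × rootsOfUnity (2 * m) k) k}

/-- The orthogonal projection, with respect to `J`, to the complement of the span of a frame `E`. -/
def complementProj (J : Matrix N N k) (E : Matrix N (ι × rootsOfUnity (2 * m) k) k) :
    Matrix N N k :=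
  1 - E * dualFrame J E

theorem transpose_complementProj_mul (hJ : Jᵀ = J) :
    (complementProj J E)ᵀ * J = J * complementProj J E := by
  have h : (E * dualFrame J E)ᵀ * J = J * (E * dualFrame J E) := by
    rw [transpose_mul, Matrix.mul_assoc, ← shiftMatrix_negOne_mul_dualFrame, ← Matrix.mul_assoc,
      transpose_dualFrame_mul hJ, Matrix.mul_assoc]
  rw [complementProj, transpose_sub, transpose_one, Matrix.sub_mul, Matrix.mul_sub, h,
    Matrix.one_mul, Matrix.mul_one]

namespace IsFrame

theorem complementProj_mul_self (h : IsFrame J u c z E) :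
    complementProj J E * complementProj J E = complementProj J E := by
  have h' : IsIdempotentElem (E * dualFrame J E) := by
    rw [IsIdempotentElem, Matrix.mul_assoc, ← Matrix.mul_assoc _ E, h.dualFrame_mul, Matrix.one_mul]
  exact h'.one_sub

theorem commute_complementProj (h : IsFrame J u c z E) (huJ : uᵀ * J * u = J) :
    Commute (complementProj J E) u := by
  refine (Commute.one_left u).sub_left ?_
  rw [Commute, SemiconjBy, Matrix.mul_assoc, h.dualFrame_mul_comm huJ, ← Matrix.mul_assoc,
    ← h.mul_left, Matrix.mul_assoc]

theorem mul_complementProj (h : IsFrame J u c z E) (hskew : ∀ x ∈ c, xᵀ * J + J * x = 0)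
    {x : Matrix N N k} (hx : x ∈ c) : x * complementProj J E = complementProj J E * x := by
  obtain ⟨a, ha⟩ := h.weight x hx
  rw [complementProj, Matrix.mul_sub, Matrix.sub_mul, Matrix.mul_assoc E,
    dualFrame_mul_of_mul_eq (hskew x hx) ha, ← Matrix.mul_assoc, ← Matrix.mul_assoc, ha,
    Matrix.one_mul, Matrix.mul_one]

theorem transpose_mul_mul_complementProj (h : IsFrame J u c z E) :
    Eᵀ * J * complementProj J E = 0 := by
  rw [complementProj, Matrix.mul_sub, Matrix.mul_one, ← Matrix.mul_assoc, h.gram,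
    shiftMatrix_negOne_mul_dualFrame, sub_self]

theorem exists_eq_cartanMap (h : IsFrame J u c z E) {x : Matrix N N k} (hx : x ∈ c)
    (hx0 : x * complementProj J E = 0) : ∃ a, x = cartanMap J E a := by
  obtain ⟨a, ha⟩ := h.weight x hx
  rw [complementProj, Matrix.mul_sub, Matrix.mul_one, sub_eq_zero, ← Matrix.mul_assoc, ha] at hx0
  exact ⟨a, hx0⟩

end IsFrame

end Complement

section Cartan

variable {k N : Type*} [Field k] [Fintype N] [DecidableEq N] {m : ℕ} {J u : Matrix N N k}
  {c : Submodule k (Matrix N N k)} {z : rootsOfUnity (2 * m) k}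

/-- The component of degree `1` of the grading that the automorphism `Int u`, with eigenvalue `ζ`
in degree `1`, induces on the orthogonal Lie algebra of the bilinear form `J`. -/
def gradedPiece (J u : Matrix N N k) (ζ : k) : Set (Matrix N N k) :=
  {x | xᵀ * J + J * x = 0 ∧ u * x * u⁻¹ = ζ • x}

theorem mem_gradedPiece_iff (hu : IsUnit u.det) {ζ : k} {x : Matrix N N k} :
    x ∈ gradedPiece J u ζ ↔ xᵀ * J + J * x = 0 ∧ u * x = ζ • (x * u) := by
  refine and_congr_right fun _ => ⟨fun h => ?_, fun h => ?_⟩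
  · rw [← Matrix.smul_mul, ← h, nonsing_inv_mul_cancel_right _ _ hu]
  · rw [h, Matrix.smul_mul, mul_nonsing_inv_cancel_right _ _ hu]

variable [DecidableEq k] [Fintype (rootsOfUnity (2 * m) k)]

theorem IsFrame.exists_succ (h2 : (2 : k) ≠ 0) (hm : Odd m)
    (hz : IsPrimitiveRoot ((z : kˣ) : k) m) (hJ : Jᵀ = J) (hJu : IsUnit J.det)
    (huJ : uᵀ * J * u = J) (hum : u ^ m = 1) (hskew : ∀ x ∈ c, xᵀ * J + J * x = 0)
    (hux : ∀ x ∈ c, u * x = ((z : kˣ) : k) • (x * u)) (hcomm : ∀ x ∈ c, ∀ y ∈ c, x * y = y * x)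
    (hss : ∀ x ∈ c, IsSemisimpleMat x) {s : ℕ} {E : Matrix N (Fin s × rootsOfUnity (2 * m) k) k}
    (h : IsFrame J u c z E) {x₀ : Matrix N N k} (hx₀c : x₀ ∈ c)
    (hx₀ : x₀ * complementProj J E ≠ 0) :
    ∃ E' : Matrix N (Fin (s + 1) × rootsOfUnity (2 * m) k) k, IsFrame J u c z E' := by
  obtain ⟨χ, e, f, he, hf, hPe, hPf, hef, hχ⟩ :=
    exists_isWeightVector_pair (x₀ := ⟨x₀, hx₀c⟩) hJu hskew hcomm hss h.complementProj_mul_self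
      (transpose_complementProj_mul hJ) (fun x hx => h.mul_complementProj hskew hx) hx₀
  obtain ⟨φ, hneg, hφ⟩ := exists_monoidHom_inv_eq h2 hm hz hum
  refine ⟨_, h.cons hJ (isEigenchain_eigenchain h2 hm hz hJ huJ hskew hux hneg hφ he hf hef hχ)
    fun t => ?_⟩
  rw [← mulVec_eigenchain_eq_self h2 hm hz hneg hφ (h.commute_complementProj huJ) hPe hPf t,
    mulVec_mulVec, h.transpose_mul_mul_complementProj, zero_mulVec]

theorem exists_isFrame_forall_mul_eq_zero (h2 : (2 : k) ≠ 0) (hm : Odd m)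
    (hz : IsPrimitiveRoot ((z : kˣ) : k) m) (hJ : Jᵀ = J) (hJu : IsUnit J.det)
    (huJ : uᵀ * J * u = J) (hum : u ^ m = 1) (hskew : ∀ x ∈ c, xᵀ * J + J * x = 0)
    (hux : ∀ x ∈ c, u * x = ((z : kˣ) : k) • (x * u)) (hcomm : ∀ x ∈ c, ∀ y ∈ c, x * y = y * x)
    (hss : ∀ x ∈ c, IsSemisimpleMat x) :
    ∃ (s : ℕ) (E : Matrix N (Fin s × rootsOfUnity (2 * m) k) k),
      IsFrame J u c z E ∧ ∀ x ∈ c, x * complementProj J E = 0 := by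
  by_contra! hne
  have hexists (s : ℕ) :
      ∃ E : Matrix N (Fin s × rootsOfUnity (2 * m) k) k, IsFrame J u c z E := by
    induction s with
    | zero => exact ⟨0, isFrame_of_isEmpty 0⟩
    | succ s ih =>
      obtain ⟨E, hE⟩ := ih
      obtain ⟨x₀, hx₀c, hx₀⟩ := hne s E hE
      exact hE.exists_succ h2 hm hz hJ hJu huJ hum hskew hux hcomm hss hx₀c hx₀
  obtain ⟨E, hE⟩ := hexists (Fintype.card N + 1)
  have hcard := hE.card_mul_card_le
  rw [Fintype.card_fin] at hcard
  exact (Nat.lt_succ_self _).not_ge ((Nat.le_mul_of_pos_right _ Fintype.card_pos).trans hcard)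

theorem IsCartanSubspace.exists_isFrame (h2 : (2 : k) ≠ 0) (hm : Odd m)
    (hz : IsPrimitiveRoot ((z : kˣ) : k) m) (hJ : Jᵀ = J) (hJu : IsUnit J.det)
    (huJ : uᵀ * J * u = J) (hum : u ^ m = 1)
    (hc : IsCartanSubspace (gradedPiece J u ((z : kˣ) : k)) c) :
    ∃ (s : ℕ) (E : Matrix N (Fin s × rootsOfUnity (2 * m) k) k),
      IsFrame J u c z E ∧ LinearMap.range (cartanMap J E) = c := by
  obtain ⟨hc1, hcomm, hss, hmax⟩ := hc
  have hu : IsUnit u.det := (isUnit_iff_isUnit_det u).1 (.of_pow_eq_one hum hm.pos.ne')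
  obtain ⟨s, E, hE, hEc⟩ := exists_isFrame_forall_mul_eq_zero h2 hm hz hJ hJu huJ hum
    (fun x hx => ((mem_gradedPiece_iff hu).1 (hc1 hx)).1)
    (fun x hx => ((mem_gradedPiece_iff hu).1 (hc1 hx)).2) hcomm hss
  refine ⟨s, E, hE, hmax _ ⟨?_, ?_, ?_⟩ fun x hx => ?_⟩
  · rintro _ ⟨a, rfl⟩
    exact (mem_gradedPiece_iff hu).2 ⟨transpose_cartanMap_mul_add hJ a, hE.mul_cartanMap huJ a⟩
  · rintro _ ⟨a, rfl⟩ _ ⟨b, rfl⟩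
    exact hE.cartanMap_mul_comm a b
  · rintro _ ⟨a, rfl⟩
    exact hE.isSemisimpleMat_cartanMap a
  · obtain ⟨a, rfl⟩ := hE.exists_eq_cartanMap hx (hEc x hx)
    exact ⟨a, rfl⟩

end Cartan

/-! ### Little Weyl groups -/

section FullFrame

variable {k : Type*} [Field k] [DecidableEq k] {m : ℕ} {ι : Type*} [Fintype ι] [DecidableEq ι]
  [Fintype (rootsOfUnity (2 * m) k)]
  {Z : Matrix (ι × rootsOfUnity (2 * m) k) (ι × rootsOfUnity (2 * m) k) k}

theorem isDiag_of_commute_weightDiagonal (hZ : ∀ a, Commute Z (weightDiagonal m a)) :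
    Z.IsDiag := by
  intro p q hpq
  have hentry := congrFun₂ (hZ (Pi.single q.1 1)).eq p q
  rw [weightDiagonal_apply, mul_diagonal, diagonal_mul, mul_comm, ← sub_eq_zero, ← sub_mul,
    Pi.single_eq_same, one_mul] at hentry
  refine (mul_eq_zero.1 hentry).resolve_left fun h => ?_
  rcases eq_or_ne p.1 q.1 with hi | hi
  · rw [hi, Pi.single_eq_same, one_mul, sub_eq_zero] at h
    exact hpq (Prod.ext hi (Subtype.ext (Units.ext h.symm)))
  · rw [Pi.single_eq_of_ne hi, zero_mul, sub_zero] at h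
    exact (q.2 : kˣ).ne_zero h

theorem det_eq_one_of_isDiag (h2 : (2 : k) ≠ 0) (hZ : Z.IsDiag)
    (hZS : Zᵀ * shiftMatrix ι (negOne k m) * Z = shiftMatrix ι (negOne k m)) : Z.det = 1 := by
  obtain ⟨d, rfl⟩ : ∃ d, diagonal d = Z := ⟨_, hZ.diagonal_diag⟩
  have hd (i : ι) (t : rootsOfUnity (2 * m) k) : d (i, negOne k m * t) * d (i, t) = 1 := by
    simpa [shiftMatrix_apply, mul_diagonal, diagonal_mul] using
      congrFun₂ hZS (i, negOne k m * t) (i, t)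
  rw [det_diagonal]
  refine Finset.prod_involution (fun p _ => (p.1, negOne k m * p.2)) (fun p _ => ?_)
    (fun p _ _ h => ?_) (fun p _ => Finset.mem_univ _) fun p _ => ?_
  · rw [mul_comm, hd]
  · exact negOne_ne_one h2 (mul_eq_right.1 (congrArg Prod.snd h))
  · rw [← mul_assoc, negOne_mul_negOne, one_mul]

variable {N : Type*} [Fintype N] [DecidableEq N] {J u : Matrix N N k}
  {c : Submodule k (Matrix N N k)} {z : rootsOfUnity (2 * m) k}
  {E : Matrix N (ι × rootsOfUnity (2 * m) k) k}

namespace IsFrame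

theorem mul_dualFrame (h : IsFrame J u c z E)
    (hcard : Fintype.card N ≤ Fintype.card ι * Fintype.card (rootsOfUnity (2 * m) k)) :
    E * dualFrame J E = 1 := by
  have hN : Fintype.card N = Fintype.card (ι × rootsOfUnity (2 * m) k) := by
    rw [Fintype.card_prod]
    exact hcard.antisymm h.card_mul_card_le
  exact (Matrix.mul_eq_one_comm_of_equiv (Fintype.equivOfCardEq hN)).2 h.dualFrame_mul

theorem det_eq_one_of_commute (h2 : (2 : k) ≠ 0) (h : IsFrame J u c z E)
    (hcard : Fintype.card N ≤ Fintype.card ι * Fintype.card (rootsOfUnity (2 * m) k))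
    {x : Matrix N N k} (hxJ : xᵀ * J * x = J) (hx : ∀ a, Commute x (cartanMap J E a)) :
    x.det = 1 := by
  have hFE := h.dualFrame_mul
  have hEF := h.mul_dualFrame hcard
  rw [← det_conj_of_mul_eq_one hFE hEF]
  refine det_eq_one_of_isDiag h2 (isDiag_of_commute_weightDiagonal fun a => ?_) ?_
  · calc dualFrame J E * x * E * weightDiagonal m a
        = dualFrame J E * (x * cartanMap J E a) * E := by
          simp only [cartanMap_apply, Matrix.mul_assoc, hFE, Matrix.mul_one]
      _ = dualFrame J E * E * weightDiagonal m a * (dualFrame J E * x * E) := by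
          rw [(hx a).eq, cartanMap_apply]
          simp only [Matrix.mul_assoc]
      _ = weightDiagonal m a * (dualFrame J E * x * E) := by rw [hFE, Matrix.one_mul]
  · have hxE : E * (dualFrame J E * x * E) = x * E := by
      rw [← Matrix.mul_assoc, ← Matrix.mul_assoc, hEF, Matrix.one_mul]
    rw [← h.gram]
    calc (dualFrame J E * x * E)ᵀ * (Eᵀ * J * E) * (dualFrame J E * x * E)
        = (E * (dualFrame J E * x * E))ᵀ * J * (E * (dualFrame J E * x * E)) := by
          rw [transpose_mul E]
          simp only [Matrix.mul_assoc]
      _ = Eᵀ * (xᵀ * J * x) * E := by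
          rw [hxE, transpose_mul]
          simp only [Matrix.mul_assoc]
      _ = Eᵀ * J * E := by rw [hxJ]

end IsFrame

end FullFrame

section Weyl

open Equiv

theorem exists_perm_of_mul_eq_zero {ι R : Type*} [Finite ι] [MulZeroClass R] [NoZeroDivisors R]
    {w : Matrix ι ι R} (hcol : ∀ j, w.col j ≠ 0) (hmul : ∀ i j l, j ≠ l → w i j * w i l = 0) :
    ∃ σ : Perm ι, (∀ j, w (σ j) j ≠ 0) ∧ ∀ i j, i ≠ σ j → w i j = 0 := by
  choose f hf using fun j => Function.ne_iff.1 (hcol j)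
  have hrow {i j l : ι} (hj : w i j ≠ 0) (hl : w i l ≠ 0) : j = l := by
    by_contra hjl
    exact (mul_eq_zero.1 (hmul i j l hjl)).elim hj hl
  have hbij : Function.Bijective f := Finite.injective_iff_bijective.1 fun j l hjl =>
    hrow (hf j) (hjl ▸ hf l)
  refine ⟨Equiv.ofBijective f hbij, hf, fun i j hij => ?_⟩
  contrapose! hij
  obtain ⟨l, rfl⟩ := hbij.2 i
  rw [hrow (hf l) hij]
  rfl

theorem inv_mul_mul_mem_of_mul_mul_inv_mem {k A : Type*} [Field k] [Ring A] [Algebra k A]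
    {c : Submodule k A} [FiniteDimensional k c] {g : Aˣ} (hg : ∀ x ∈ c, g * x * ↑g⁻¹ ∈ c) {x : A}
    (hx : x ∈ c) : ↑g⁻¹ * x * g ∈ c := by
  let L : c →ₗ[k] c := (LinearMap.mulLeftRight k ((g : A), (↑g⁻¹ : A))).restrict hg
  have hL : Function.Injective L := fun y y' hyy' => Subtype.ext <| by
    have h : (g : A) * y * ↑g⁻¹ = g * y' * ↑g⁻¹ := congrArg Subtype.val hyy'
    rwa [Units.mul_left_inj, Units.mul_right_inj] at h
  obtain ⟨y, hy⟩ := LinearMap.injective_iff_surjective.1 hL ⟨x, hx⟩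
  have h : (g : A) * y * ↑g⁻¹ = x := congrArg Subtype.val hy
  rw [← h, mul_assoc, Units.inv_mul_cancel_right, Units.inv_mul_cancel_left]
  exact y.2

variable {k N : Type*} [Field k] [Fintype N] [DecidableEq N] {m : ℕ} {J u : Matrix N N k}
  {c : Submodule k (Matrix N N k)} {z : rootsOfUnity (2 * m) k}

/-- The centralizer of `u` in the orthogonal group of the bilinear form `J`. -/
def orthogonalCentralizer (J u : Matrix N N k) : Subgroup (Matrix N N k)ˣ where
  carrier := {g | g.1ᵀ * J * g = J ∧ Commute g.1 u}
  one_mem' := ⟨by simp, Commute.one_left u⟩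
  mul_mem' {g h} hg hh := by
    refine ⟨?_, hg.2.mul_left hh.2⟩
    calc (g * h).1ᵀ * J * (g * h).1 = h.1ᵀ * (g.1ᵀ * J * g) * h := by
          rw [Units.val_mul, transpose_mul]
          simp only [Matrix.mul_assoc]
      _ = J := by rw [hg.1, hh.1]
  inv_mem' {g} hg := by
    refine ⟨?_, hg.2.units_inv_left⟩
    have hgg : g.1 * (g⁻¹).1 = 1 := g.mul_inv
    calc (g⁻¹).1ᵀ * J * (g⁻¹).1 = (g.1 * (g⁻¹).1)ᵀ * J * (g.1 * (g⁻¹).1) := by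
          conv_lhs => rw [← hg.1]
          rw [transpose_mul]
          simp only [Matrix.mul_assoc]
      _ = J := by rw [hgg, transpose_one, Matrix.one_mul, Matrix.mul_one]

variable [DecidableEq k] [Fintype (rootsOfUnity (2 * m) k)] {ι : Type*} [Fintype ι] [DecidableEq ι]
  {E : Matrix N (ι × rootsOfUnity (2 * m) k) k}

namespace IsFrame

/-- The action of the permutations of the columns of a frame, extended by the identity on the
orthogonal complement. -/
def permHom (h : IsFrame J u c z E) :
    Perm (ι × rootsOfUnity (2 * m) k) →* (Matrix N N k)ˣ :=
  ((extendByOne h.dualFrame_mul).comp permMatrixHom).toHomUnits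

theorem permHom_apply (h : IsFrame J u c z E) (τ : Perm (ι × rootsOfUnity (2 * m) k)) :
    (h.permHom τ).1 = extendByOne h.dualFrame_mul (permMatrixHom τ) := rfl

theorem permHom_monomialPerm_mem (h : IsFrame J u c z E) (hJ : Jᵀ = J) (huJ : uᵀ * J * u = J)
    (σ : Perm ι) (b : ι → rootsOfUnity (2 * m) k) :
    h.permHom (monomialPerm σ b) ∈ orthogonalCentralizer J u := by
  refine ⟨transpose_extendByOne_mul_mul h.dualFrame_mul (transpose_dualFrame_mul hJ).symm
    shiftMatrix_negOne_mul_dualFrame.symm ?_, extendByOne_commute h.dualFrame_mul h.mul_left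
    (h.dualFrame_mul_comm huJ) (permMatrixHom_monomialPerm_mul_shiftMatrix σ b _)⟩
  rw [Matrix.mul_assoc, ← permMatrixHom_monomialPerm_mul_shiftMatrix, ← Matrix.mul_assoc,
    transpose_permMatrixHom, ← map_mul, inv_mul_cancel, map_one, Matrix.one_mul]

theorem semiconjBy_permHom_monomialPerm (h : IsFrame J u c z E) {σ : Perm ι}
    {b : ι → rootsOfUnity (2 * m) k} {a a' : ι → k} (ha : ∀ i, a' (σ i) * (b i : kˣ) = a i) :
    SemiconjBy (h.permHom (monomialPerm σ b)).1 (cartanMap J E a) (cartanMap J E a') :=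
  calc (h.permHom (monomialPerm σ b)).1 * cartanMap J E a
      = E * (permMatrixHom (monomialPerm σ b) * weightDiagonal m a) * dualFrame J E := by
        rw [permHom_apply, cartanMap_apply, ← Matrix.mul_assoc, ← Matrix.mul_assoc,
          extendByOne_mul_left, Matrix.mul_assoc E]
    _ = cartanMap J E a' * (h.permHom (monomialPerm σ b)).1 := by
        rw [permMatrixHom_mul_weightDiagonal ha, permHom_apply, cartanMap_apply,
          Matrix.mul_assoc _ (dualFrame J E), mul_extendByOne_right]
        simp only [Matrix.mul_assoc]

theorem det_permHom_monomialPerm [NeZero m] {ξ : rootsOfUnity (2 * m) k}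
    (hξ : IsPrimitiveRoot ((ξ : kˣ) : k) (2 * m)) (h : IsFrame J u c z E) (σ : Perm ι)
    (b : ι → rootsOfUnity (2 * m) k) :
    (h.permHom (monomialPerm σ b)).1.det = (∏ i, ((b i : kˣ) : k)) ^ m := by
  have hcard : Even (Fintype.card (rootsOfUnity (2 * m) k)) := by
    rw [← Nat.card_eq_fintype_card, hξ.card_rootsOfUnity]
    exact even_two_mul m
  rw [permHom_apply, det_extendByOne, det_permMatrixHom, sign_monomialPerm hcard]
  push_cast
  rw [← Finset.prod_pow]
  exact Finset.prod_congr rfl fun i _ => sign_mulLeft_rootsOfUnity hξ (b i)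

theorem exists_perm_of_semiconjBy (h : IsFrame J u c z E) {g : (Matrix N N k)ˣ}
    {w : Matrix ι ι k} (hgw : ∀ a, SemiconjBy g.1 (cartanMap J E a) (cartanMap J E (w *ᵥ a))) :
    ∃ σ : Perm ι, (∀ i j, i ≠ σ j → w i j = 0) ∧ ∀ j, w (σ j) j ^ (2 * m) = 1 := by
  have hcol (j : ι) : w.col j ≠ 0 := fun hj => by
    have hj' := hgw (Pi.single j 1)
    rw [mulVec_single_one, hj, map_zero, SemiconjBy, zero_mul, Units.mul_right_eq_zero,
      ← map_zero (cartanMap J E), h.cartanMap_injective.eq_iff, Pi.single_eq_zero_iff] at hj'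
    exact one_ne_zero hj'
  have hmul (i j l : ι) (hjl : j ≠ l) : w i j * w i l = 0 := by
    have hsingle : (Pi.single j 1 * Pi.single l 1 : ι → k) = 0 := by
      rw [← Pi.single_mul_left, Pi.single_eq_of_ne hjl, mul_zero, Pi.single_zero]
    have hjl' := (hgw (Pi.single j 1)).mul_right (hgw (Pi.single l 1))
    rw [h.cartanMap_mul_eq_zero_iff.2 hsingle, SemiconjBy, mul_zero, eq_comm,
      Units.mul_left_eq_zero, h.cartanMap_mul_eq_zero_iff, mulVec_single_one,
      mulVec_single_one] at hjl'
    exact congrFun hjl' i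
  have hpow (i j : ι) : w i j ^ (2 * m + 1) = w i j := by
    have hsingle : (fun i => (Pi.single j 1 : ι → k) i ^ (2 * m + 1)) = Pi.single j 1 := by
      ext i
      rcases eq_or_ne i j with rfl | hij
      · rw [Pi.single_eq_same, one_pow]
      · rw [Pi.single_eq_of_ne hij, zero_pow (Nat.succ_ne_zero _)]
    have hj := (hgw (Pi.single j 1)).pow_right (2 * m + 1)
    rw [h.cartanMap_pow, h.cartanMap_pow, hsingle, SemiconjBy, (hgw (Pi.single j 1)).eq,
      Units.mul_left_inj, h.cartanMap_injective.eq_iff, mulVec_single_one] at hj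
    exact (congrFun hj i).symm
  obtain ⟨σ, hσ, h0⟩ := exists_perm_of_mul_eq_zero hcol hmul
  exact ⟨σ, h0, fun j => mul_right_cancel₀ (hσ j) (by rw [← pow_succ, hpow, one_mul])⟩

theorem exists_semiconjBy_of_perm [NeZero m] {ξ : rootsOfUnity (2 * m) k}
    (hξ : IsPrimitiveRoot ((ξ : kˣ) : k) (2 * m)) (hJ : Jᵀ = J) (huJ : uᵀ * J * u = J)
    (h : IsFrame J u c z E) {w : Matrix ι ι k} {σ : Perm ι} (h0 : ∀ i j, i ≠ σ j → w i j = 0)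
    (h1 : ∀ j, w (σ j) j ^ (2 * m) = 1) :
    ∃ g ∈ orthogonalCentralizer J u, g.1.det * (∏ j, w (σ j) j) ^ m = 1 ∧
      ∀ a, SemiconjBy g.1 (cartanMap J E a) (cartanMap J E (w *ᵥ a)) := by
  let b (j : ι) : rootsOfUnity (2 * m) k := (rootsOfUnity.mkOfPowEq _ (h1 j))⁻¹
  have hb (j : ι) : w (σ j) j * (b j : kˣ) = 1 := by
    have hbj := (b j : kˣ).inv_mul
    rwa [← Subgroup.coe_inv, inv_inv, rootsOfUnity.coe_mkOfPowEq] at hbj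
  refine ⟨_, h.permHom_monomialPerm_mem hJ huJ σ b, ?_, fun a =>
    h.semiconjBy_permHom_monomialPerm fun j => ?_⟩
  · rw [h.det_permHom_monomialPerm hξ, ← mul_pow, ← Finset.prod_mul_distrib]
    simp only [mul_comm _ (w _ _), hb, Finset.prod_const_one, one_pow]
  · have hwa : (w *ᵥ a) (σ j) = w (σ j) j * a j :=
      Fintype.sum_eq_single j fun l hl =>
        mul_eq_zero_of_left (h0 _ _ fun hσ => hl (σ.injective hσ).symm) _
    rw [hwa, mul_right_comm, hb, one_mul]

end IsFrame

end Weyl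

section LittleWeyl

variable {k N : Type*} [Field k] [Fintype N] [DecidableEq N] {m : ℕ} {J u : Matrix N N k}
  {c : Submodule k (Matrix N N k)} {z : rootsOfUnity (2 * m) k}

/-- The centralizer of `u` in the special orthogonal group of the bilinear form `J`. -/
def specialOrthogonalCentralizer (J u : Matrix N N k) : Set (Matrix N N k) :=
  {h | hᵀ * J * h = J ∧ h.det = 1 ∧ h * u = u * h}

theorem prod_pow_eq_one_or_eq_neg_one {ι R : Type*} [Fintype ι] [CommRing R] [NoZeroDivisors R]
    {m : ℕ} {f : ι → R} (hf : ∀ i, f i ^ (2 * m) = 1) :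
    (∏ i, f i) ^ m = 1 ∨ (∏ i, f i) ^ m = -1 := by
  rw [← sq_eq_one_iff, ← pow_mul, mul_comm, ← Finset.prod_pow]
  exact Finset.prod_eq_one fun i _ => hf i

theorem sum_smul_map_single {R ι M : Type*} [CommSemiring R] [Fintype ι] [DecidableEq ι]
    [AddCommMonoid M] [Module R M] (T : (ι → R) →ₗ[R] M) (w : Matrix ι ι R) (j : ι) :
    ∑ i, w i j • T (Pi.single i 1) = T (w *ᵥ Pi.single j 1) := by
  rw [mulVec_single_one, ← Finset.univ_sum_single (w.col j), map_sum]
  refine Finset.sum_congr rfl fun i _ => ?_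
  rw [← map_smul, ← Pi.single_smul, smul_eq_mul, mul_one, col_apply]

variable [DecidableEq k] [Fintype (rootsOfUnity (2 * m) k)] {r : ℕ}
  {E : Matrix N (Fin r × rootsOfUnity (2 * m) k) k} {w : Matrix (Fin r) (Fin r) k}

theorem mem_littleWeylSet_iff (hE : LinearMap.range (cartanMap J E) = c) :
    w ∈ littleWeylSet (specialOrthogonalCentralizer J u) c
        (fun j => cartanMap J E (Pi.single j 1)) ↔
      ∃ g ∈ orthogonalCentralizer J u, g.1.det = 1 ∧
        ∀ a, SemiconjBy g.1 (cartanMap J E a) (cartanMap J E (w *ᵥ a)) := by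
  constructor
  · rintro ⟨h, ⟨hhJ, hdet, hhu⟩, -, -, hw⟩
    have hh : IsUnit h.det := hdet ▸ isUnit_one
    refine ⟨nonsingInvUnit h hh, ⟨hhJ, hhu⟩, hdet, fun a => ?_⟩
    suffices hlin : LinearMap.mulLeftRight k (h, h⁻¹) ∘ₗ cartanMap J E =
        cartanMap J E ∘ₗ w.mulVecLin by
      have hha : h * cartanMap J E a * h⁻¹ = cartanMap J E (w *ᵥ a) := LinearMap.congr_fun hlin a
      exact show h * _ = _ * h by rw [← hha, nonsing_inv_mul_cancel_right _ _ hh]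
    refine LinearMap.pi_ext' fun j => LinearMap.ext_ring ?_
    exact (hw j).trans (sum_smul_map_single _ w j)
  · rintro ⟨g, ⟨hgJ, hgu⟩, hdet, hgw⟩
    have hconj (a : Fin r → k) : g * cartanMap J E a * (g⁻¹).1 = cartanMap J E (w *ᵥ a) :=
      (Units.mul_inv_eq_iff_eq_mul g).2 (hgw a)
    have hgc : ∀ x ∈ c, g * x * (g⁻¹).1 ∈ c := by
      rw [← hE]
      rintro _ ⟨a, rfl⟩
      exact ⟨_, (hconj a).symm⟩
    refine ⟨g, ⟨hgJ, hdet, hgu⟩, ?_, ?_, fun j => ?_⟩ <;> rw [← coe_units_inv]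
    · exact hgc
    · exact fun x hx => inv_mul_mul_mem_of_mul_mul_inv_mem hgc hx
    · rw [hconj, sum_smul_map_single]

namespace IsFrame

theorem mem_littleWeylSet_iff_exists_perm [NeZero m] {ξ : rootsOfUnity (2 * m) k}
    (hξ : IsPrimitiveRoot ((ξ : kˣ) : k) (2 * m)) (hJ : Jᵀ = J) (huJ : uᵀ * J * u = J)
    (h : IsFrame J u c z E) (hE : LinearMap.range (cartanMap J E) = c) :
    w ∈ littleWeylSet (specialOrthogonalCentralizer J u) c
        (fun j => cartanMap J E (Pi.single j 1)) ↔
      ∃ σ : Equiv.Perm (Fin r), (∀ i j, i ≠ σ j → w i j = 0) ∧ (∀ j, w (σ j) j ^ (2 * m) = 1) ∧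
        ((∏ j, w (σ j) j) ^ m = 1 ∨
          ∃ x ∈ orthogonalCentralizer J u, x.1.det = -1 ∧ ∀ y ∈ c, Commute x.1 y) := by
  rw [mem_littleWeylSet_iff hE]
  constructor
  · rintro ⟨g, hg, hdet, hgw⟩
    obtain ⟨σ, h0, h1⟩ := h.exists_perm_of_semiconjBy hgw
    obtain ⟨g', hg', hdet', hgw'⟩ := h.exists_semiconjBy_of_perm hξ hJ huJ h0 h1
    refine ⟨σ, h0, h1, (prod_pow_eq_one_or_eq_neg_one h1).imp_right fun hneg => ?_⟩
    refine ⟨g'⁻¹ * g, mul_mem (inv_mem hg') hg, ?_, ?_⟩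
    · have hinv : (g'⁻¹).1.det * g'.1.det = 1 := by rw [← det_mul, g'.inv_mul, det_one]
      rw [hneg, mul_neg_one, neg_eq_iff_eq_neg] at hdet'
      rw [hdet', mul_neg_one, neg_eq_iff_eq_neg] at hinv
      rw [Units.val_mul, det_mul, hdet, mul_one, hinv]
    · rw [← hE]
      rintro _ ⟨a, rfl⟩
      exact (hgw' a).units_inv_symm_left.mul_left (hgw a)
  · rintro ⟨σ, h0, h1, hσ⟩
    obtain ⟨g, hg, hdet, hgw⟩ := h.exists_semiconjBy_of_perm hξ hJ huJ h0 h1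
    rcases prod_pow_eq_one_or_eq_neg_one h1 with hone | hneg
    · exact ⟨g, hg, by rwa [hone, mul_one] at hdet, hgw⟩
    rw [hneg, mul_neg_one, neg_eq_iff_eq_neg] at hdet
    rcases hσ with hone | ⟨x, hx, hxdet, hxc⟩
    · exact ⟨g, hg, by rw [hdet, ← hneg, hone], hgw⟩
    · refine ⟨g * x, mul_mem hg hx, ?_, fun a => (hgw a).mul_left (hxc _ (hE ▸ ⟨a, rfl⟩))⟩
      rw [Units.val_mul, det_mul, hdet, hxdet, neg_mul_neg, one_mul]

theorem littleWeylSet_eq_GmqrSet_one [NeZero m] {ξ : rootsOfUnity (2 * m) k}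
    (hξ : IsPrimitiveRoot ((ξ : kˣ) : k) (2 * m)) (hJ : Jᵀ = J) (huJ : uᵀ * J * u = J)
    (h : IsFrame J u c z E) (hE : LinearMap.range (cartanMap J E) = c)
    (hx : ∃ x ∈ orthogonalCentralizer J u, x.1.det = -1 ∧ ∀ y ∈ c, Commute x.1 y) :
    littleWeylSet (specialOrthogonalCentralizer J u) c
      (fun j => cartanMap J E (Pi.single j 1)) = GmqrSet k (2 * m) 1 r := by
  ext w
  rw [h.mem_littleWeylSet_iff_exists_perm hξ hJ huJ hE]
  refine exists_congr fun σ => and_congr_right fun _ => and_congr_right fun h1 =>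
    iff_of_true (.inr hx) ?_
  rw [Nat.div_one, ← Finset.prod_pow]
  exact Finset.prod_eq_one fun j _ => h1 j

theorem littleWeylSet_eq_GmqrSet_two [NeZero m] {ξ : rootsOfUnity (2 * m) k}
    (hξ : IsPrimitiveRoot ((ξ : kˣ) : k) (2 * m)) (hJ : Jᵀ = J) (huJ : uᵀ * J * u = J)
    (h : IsFrame J u c z E) (hE : LinearMap.range (cartanMap J E) = c)
    (hx : ¬∃ x ∈ orthogonalCentralizer J u, x.1.det = -1 ∧ ∀ y ∈ c, Commute x.1 y) :
    littleWeylSet (specialOrthogonalCentralizer J u) c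
      (fun j => cartanMap J E (Pi.single j 1)) = GmqrSet k (2 * m) 2 r := by
  ext w
  rw [h.mem_littleWeylSet_iff_exists_perm hξ hJ huJ hE, GmqrSet,
    Nat.mul_div_cancel_left m two_pos]
  simp only [hx, or_false, Set.mem_ofPred_eq]

end IsFrame

end LittleWeyl

theorem stmt13_general {k : Type*} [Field k] (h2 : (2 : k) ≠ 0) {m : ℕ} (hm : Odd m) {ζ : k}
    (hζ : IsPrimitiveRoot ζ m) {N : Type*} [Fintype N] [DecidableEq N] {J u : Matrix N N k}
    (hJ : Jᵀ = J) (hJu : IsUnit J.det) (huJ : uᵀ * J * u = J) (hum : u ^ m = 1)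
    {c : Submodule k (Matrix N N k)} (hc : IsCartanSubspace (gradedPiece J u ζ) c) {r : ℕ}
    (hr : Module.finrank k c = r) :
    ∃ b : Fin r → Matrix N N k, LinearIndependent k b ∧ Submodule.span k (Set.range b) = c ∧
      ((2 * (m * r) < Fintype.card N ∧ ∃ x : Matrix N N k,
          xᵀ * J * x = J ∧ x.det = -1 ∧ x * u = u * x ∧ ∀ y ∈ c, x * y = y * x) →
        littleWeylSet (specialOrthogonalCentralizer J u) c b = GmqrSet k (2 * m) 1 r) ∧
      (¬(2 * (m * r) < Fintype.card N ∧ ∃ x : Matrix N N k,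
          xᵀ * J * x = J ∧ x.det = -1 ∧ x * u = u * x ∧ ∀ y ∈ c, x * y = y * x) →
        littleWeylSet (specialOrthogonalCentralizer J u) c b = GmqrSet k (2 * m) 2 r) := by
  classical
  have : NeZero m := ⟨hm.pos.ne'⟩
  have := Fintype.ofFinite (rootsOfUnity (2 * m) k)
  obtain ⟨z, rfl⟩ : ∃ z : rootsOfUnity (2 * m) k, ((z : kˣ) : k) = ζ :=
    ⟨rootsOfUnity.mkOfPowEq ζ (by rw [mul_comm, pow_mul, hζ.pow_eq_one, one_pow]),
      rootsOfUnity.coe_mkOfPowEq _⟩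
  have hξ := isPrimitiveRoot_negOne_mul_inv h2 hm hζ
  obtain ⟨s, E, hE, hEc⟩ := hc.exists_isFrame h2 hm hζ hJ hJu huJ hum
  obtain rfl : s = r := by
    rw [← hr, ← hEc, hE.finrank_range_cartanMap, Fintype.card_fin]
  refine ⟨_, hE.linearIndependent_cartanMap_single, span_range_cartanMap_single.trans hEc, ?_, ?_⟩
  · rintro ⟨-, x, hxJ, hxdet, hxu, hxc⟩
    have hx : IsUnit x.det := hxdet ▸ isUnit_one.neg
    exact hE.littleWeylSet_eq_GmqrSet_one hξ hJ huJ hEc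
      ⟨nonsingInvUnit x hx, ⟨hxJ, hxu⟩, hxdet, hxc⟩
  · refine fun hne => hE.littleWeylSet_eq_GmqrSet_two hξ hJ huJ hEc ?_
    rintro ⟨x, ⟨hxJ, hxu⟩, hxdet, hxc⟩
    have hcard : Fintype.card N ≤
        Fintype.card (Fin s) * Fintype.card (rootsOfUnity (2 * m) k) := by
      rw [Fintype.card_fin, ← Nat.card_eq_fintype_card (α := rootsOfUnity _ _),
        hξ.card_rootsOfUnity, mul_comm, mul_assoc]
      exact not_lt.1 fun hlt => hne ⟨hlt, x, hxJ, hxdet, hxu, hxc⟩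
    have hdet := hE.det_eq_one_of_commute h2 hcard hxJ fun a => hxc _ (hEc ▸ ⟨a, rfl⟩)
    exact h2 (by rw [← one_add_one_eq_two, ← eq_neg_iff_add_eq_zero, ← hxdet, hdet])

theorem transpose_antidiagJ (k : Type*) [Field k] (N : ℕ) : (antidiagJ k N)ᵀ = antidiagJ k N := by
  ext i j
  simp only [antidiagJ, transpose_apply, of_apply, add_comm]

theorem antidiagJ_eq_permMatrix (k : Type*) [Field k] (N : ℕ) :
    antidiagJ k N = Fin.revPerm.permMatrix k := by
  ext i j
  simp only [antidiagJ, of_apply, Equiv.Perm.permMatrix, PEquiv.toMatrix_apply,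
    Equiv.toPEquiv_apply, Option.mem_some_iff, Fin.revPerm_apply, Fin.ext_iff, Fin.val_rev]
  exact if_congr (by omega) rfl rfl

theorem isUnit_det_antidiagJ (k : Type*) [Field k] (N : ℕ) : IsUnit (antidiagJ k N).det := by
  rw [antidiagJ_eq_permMatrix, det_permutation]
  exact (Equiv.Perm.sign Fin.revPerm).isUnit.map (Int.castRingHom k)

/-- little Weyl group of an inner automorphism of `SO(2n,k)` of
odd order exactly `m`, given by `u ∈ SO(2n,k)` with `u^m = I`: with respect
to a suitable basis of a Cartan subspace `c` (of dimension `r`) it equals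
`G(2m,1,r)` if `n > mr` and some `x ∈ O(2n,k)` of determinant `-1` commutes
with `u` and with every element of `c`; otherwise it equals `G(2m,2,r)`. -/
theorem stmt13 {k : Type*} [Field k] [IsAlgClosed k]
    (hchar : ringChar k = 0 ∨ 2 < ringChar k)
    (m : ℕ) (hm : 0 < m) (hmodd : Odd m) (hmchar : ¬ (ringChar k ∣ m))
    (ζ : k) (hζ : IsPrimitiveRoot ζ m)
    (n : ℕ) (hn : 2 ≤ n)
    (u : Matrix (Fin (2 * n)) (Fin (2 * n)) k)
    (huO : u.transpose * antidiagJ k (2 * n) * u = antidiagJ k (2 * n))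
    (hudet : u.det = 1)
    (hordm : u ^ m = 1)
    (hordleast : ∀ j : ℕ, 0 < j → j < m → u ^ j ≠ 1 ∧ u ^ j ≠ -1)
    (c : Submodule k (Matrix (Fin (2 * n)) (Fin (2 * n)) k))
    (hc : IsCartanSubspace
      {x | x.transpose * antidiagJ k (2 * n) + antidiagJ k (2 * n) * x = 0 ∧
        u * x * u⁻¹ = ζ • x} c)
    (r : ℕ) (hr : Module.finrank k c = r) :
    ∃ b : Fin r → Matrix (Fin (2 * n)) (Fin (2 * n)) k,
      LinearIndependent k b ∧ Submodule.span k (Set.range b) = c ∧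
      ((n > m * r ∧ ∃ x : Matrix (Fin (2 * n)) (Fin (2 * n)) k,
          x.transpose * antidiagJ k (2 * n) * x = antidiagJ k (2 * n) ∧
          x.det = -1 ∧ x * u = u * x ∧ ∀ y ∈ c, x * y = y * x) →
        littleWeylSet
          {h | h.transpose * antidiagJ k (2 * n) * h = antidiagJ k (2 * n) ∧
            h.det = 1 ∧ h * u = u * h} c b = GmqrSet k (2 * m) 1 r) ∧
      (¬ (n > m * r ∧ ∃ x : Matrix (Fin (2 * n)) (Fin (2 * n)) k,
          x.transpose * antidiagJ k (2 * n) * x = antidiagJ k (2 * n) ∧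
          x.det = -1 ∧ x * u = u * x ∧ ∀ y ∈ c, x * y = y * x) →
        littleWeylSet
          {h | h.transpose * antidiagJ k (2 * n) * h = antidiagJ k (2 * n) ∧
            h.det = 1 ∧ h * u = u * h} c b = GmqrSet k (2 * m) 2 r) := by
  have h2 : (2 : k) ≠ 0 := Ring.two_ne_zero (by omega)
  simpa only [specialOrthogonalCentralizer, Fintype.card_fin, Nat.mul_lt_mul_left two_pos] using
    stmt13_general h2 hmodd hζ (transpose_antidiagJ k _) (isUnit_det_antidiagJ k _) huO hordm hc hr
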